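/- Let ℓ = 4^n − 1 for some integer n ≥ 1. Then there exists a constant C > 0 such that for all sufficiently large x, #{p ≤ x : p prime, p > ℓ, φ(p−ℓ) = φ(p+ℓ)} ≤ C · x / (log x)^3. -/

import Mathlib

open Filter Topology

/-!
Put `N = p - ℓ`, so that `φ N = φ (N + 2ℓ)`, and let `X` bound `N`. Let `Q` and `T` be about
`(log X) ^ 11` and `(log X) ^ 6`. Apart from few `N` for which `s - 1` is `Q`-smooth for all primes
`s ∣ N` (Rankin's trick), or for which `N` or `N + 2ℓ` is divisible by the square of an integer
above `Q`, some prime `q > Q` divides the common totient and links a prime `qa + 1 ∣ N` to a prime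
`qb + 1 ∣ N + 2ℓ`, with cofactors `m` and `m'`.

If `(qa + 1)(qb + 1) ≤ XT`, summing over `q`, `a`, `b` is enough. Otherwise `m m'` is small and one
sums over `m` and `m'` instead: modulo `q`, `m ≡ N` and `m' ≡ N + 2ℓ`, so `q` divides
`m + 2ℓ - m'`, which leaves few choices of `q` unless `m' = m + 2ℓ`. In that exceptional case
equality of the totients forces `m = 2`; then `r = qb` makes `r + 1`, `(ℓ + 1)r + 1` and
`2(ℓ + 1)r + ℓ + 2` simultaneously prime, and Selberg's sieve gives the bound `O(X / (log X) ^ 3)`.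
-/

section Counting

open Finset

theorem card_le_sum_of_forall_exists {α ι : Type*} {A : Finset α} {I : Finset ι}
    {P : ι → α → Prop} {f : ι → ℝ} (hP : ∀ x ∈ A, ∃ i ∈ I, P i x)
    (hf : ∀ i ∈ I, ∀ F ⊆ A, (∀ x ∈ F, P i x) → (#F : ℝ) ≤ f i) :
    (#A : ℝ) ≤ ∑ i ∈ I, f i := by
  classical
  have hsub : A ⊆ I.biUnion fun i ↦ A.filter (P i) := fun x hx ↦ by
    obtain ⟨i, hi, hx'⟩ := hP x hx
    exact mem_biUnion.2 ⟨i, hi, mem_filter.2 ⟨hx, hx'⟩⟩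
  calc (#A : ℝ) ≤ ∑ i ∈ I, (#(A.filter (P i)) : ℝ) := mod_cast
        (card_le_card hsub).trans card_biUnion_le
    _ ≤ ∑ i ∈ I, f i := sum_le_sum fun i hi ↦
        hf i hi _ (filter_subset _ _) fun x hx ↦ (mem_filter.1 hx).2

theorem card_le_add_of_forall_or {α : Type*} {A : Finset α} {P R : α → Prop} {s t : ℝ}
    (hPR : ∀ x ∈ A, P x ∨ R x) (hP : ∀ F ⊆ A, (∀ x ∈ F, P x) → (#F : ℝ) ≤ s)
    (hR : ∀ F ⊆ A, (∀ x ∈ F, R x) → (#F : ℝ) ≤ t) : (#A : ℝ) ≤ s + t := by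
  have := card_le_sum_of_forall_exists (A := A) (I := univ)
    (P := fun b : Bool ↦ bif b then P else R) (f := fun b ↦ bif b then s else t)
    (by simpa [or_comm] using hPR) (by simpa using ⟨hR, hP⟩)
  simpa using this

theorem card_le_div_add_one_of_modEq {A : Finset ℕ} {X D : ℕ} (hA : ∀ a ∈ A, a ≤ X)
    (h : ∀ a ∈ A, ∀ b ∈ A, a ≡ b [MOD D]) : (#A : ℝ) ≤ X / D + 1 := by
  have hinj : Set.InjOn (· / D) (A : Set ℕ) := fun a ha b hb hab ↦
    Nat.ext_div_modEq hab (h a ha b hb)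
  have hcard : #A ≤ #(range (X / D + 1)) :=
    card_le_card_of_injOn _ (fun a ha ↦ mem_coe.2 <| mem_range_succ_iff.2 <|
      Nat.div_le_div_right (hA a ha)) hinj
  rw [card_range] at hcard
  calc (#A : ℝ) ≤ ((X / D : ℕ) : ℝ) + 1 := mod_cast hcard
    _ ≤ X / D + 1 := by gcongr; exact Nat.cast_div_le

theorem card_le_of_modEq {A : Finset ℕ} {X D : ℕ} {c : ℝ} (hc : 0 ≤ c) (hD : 0 < D)
    (hA : ∀ a ∈ A, a ≤ X) (hDX : A.Nonempty → D ≤ c * X)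
    (h : ∀ a ∈ A, ∀ b ∈ A, a ≡ b [MOD D]) : (#A : ℝ) ≤ (1 + c) * X / D := by
  rcases A.eq_empty_or_nonempty with rfl | hne
  · rw [card_empty, Nat.cast_zero]
    positivity
  have : (1 : ℝ) ≤ c * X / D := by
    rw [one_le_div (by positivity)]
    exact hDX hne
  calc (#A : ℝ) ≤ X / D + 1 := card_le_div_add_one_of_modEq hA h
    _ ≤ X / D + c * X / D := by gcongr
    _ = (1 + c) * X / D := by ring

theorem sum_Icc_one_div_le_one_add_log (n : ℕ) :
    ∑ a ∈ Icc 1 n, (1 : ℝ) / a ≤ 1 + Real.log n := by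
  simpa [harmonic_eq_sum_Icc] using harmonic_le_one_add_log n

theorem sum_Ioc_one_div_sq_le {Q : ℕ} (hQ : Q ≠ 0) (n : ℕ) :
    ∑ q ∈ Ioc Q n, (1 : ℝ) / (q : ℝ) ^ 2 ≤ 1 / Q := by
  rcases le_total Q n with h | h
  · have := sum_Ioc_inv_sq_le_sub (α := ℝ) hQ h
    simp only [one_div]
    linarith [inv_nonneg.2 (Nat.cast_nonneg (α := ℝ) n)]
  · simp [Ioc_eq_empty_of_le h]

theorem card_primeFactors_le_two_mul_log {d N : ℕ} (hd : d ≠ 0) (hdN : d ≤ N) :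
    (#d.primeFactors : ℝ) ≤ 2 * Real.log N := by
  have hpow : 2 ^ #d.primeFactors ≤ N :=
    calc 2 ^ #d.primeFactors ≤ ∏ p ∈ d.primeFactors, p :=
          pow_card_le_prod _ _ _ fun p hp ↦ (Nat.prime_of_mem_primeFactors hp).two_le
      _ ≤ d := Nat.le_of_dvd (by lia) (Nat.prod_primeFactors_dvd d)
      _ ≤ N := hdN
  have hlog : #d.primeFactors * Real.log 2 ≤ Real.log N := by
    rw [← Real.log_pow]
    exact Real.log_le_log (by positivity) (mod_cast hpow)
  nlinarith [Real.log_two_gt_d9, Nat.cast_nonneg (α := ℝ) #d.primeFactors]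

end Counting

section Totient

theorem coprime_of_prime_add {a b : ℕ} (ha : a ≠ 0) (hb : b ≠ 0) (h : (a + b).Prime) :
    a.Coprime b := by
  rw [← Nat.coprime_add_self_left]
  refine h.coprime_iff_not_dvd.2 fun hdvd ↦ ?_
  have := Nat.le_of_dvd (Nat.pos_of_ne_zero hb) hdvd
  lia

theorem gcd_add_two_mul_dvd_two {N ℓ : ℕ} (h : N.Coprime ℓ) : N.gcd (N + 2 * ℓ) ∣ 2 := by
  rw [Nat.gcd_self_add_right, h.symm.gcd_mul_right_cancel_right]
  exact Nat.gcd_dvd_right _ _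

theorem sq_dvd_or_exists_prime_of_dvd_totient {q N : ℕ} (hq : q.Prime) (hN : N ≠ 0)
    (h : q ∣ N.totient) : q ^ 2 ∣ N ∨ ∃ p ∈ N.primeFactors, q ∣ p - 1 := by
  rw [Nat.totient_eq_prod_factorization hN] at h
  obtain ⟨p, hp, hdvd⟩ := (Prime.dvd_finsetProd_iff hq.prime _).1 h
  have hpN : p ∈ N.primeFactors := by simpa using hp
  refine (hq.dvd_mul.1 hdvd).imp (fun hpow ↦ ?_) fun hpred ↦ ⟨p, hpN, hpred⟩
  have hpp := Nat.prime_of_mem_primeFactors hpN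
  obtain rfl : q = p := (Nat.prime_dvd_prime_iff_eq hq hpp).1 (hq.dvd_of_dvd_pow hpow)
  have : N.factorization q - 1 ≠ 0 := fun h0 ↦ hq.one_lt.ne' (by simpa [h0] using hpow)
  rw [hq.pow_dvd_iff_le_factorization hN]
  lia

theorem totient_mul_of_prime_of_not_sq_dvd {m u : ℕ} (hu : u.Prime) (h : ¬ u ^ 2 ∣ m * u) :
    (m * u).totient = m.totient * (u - 1) := by
  have hcop : m.Coprime u := by
    rw [Nat.coprime_comm, hu.coprime_iff_not_dvd]
    exact fun hdvd ↦ h (pow_two u ▸ Nat.mul_dvd_mul_right hdvd u)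
  rw [Nat.totient_mul hcop, Nat.totient_prime hu]

theorem prod_primeFactors_mul_prod_pred_eq {m n : ℕ} (hm : m ≠ 0) (hn : n ≠ 0)
    (h : m.totient * n = n.totient * m) :
    (∏ p ∈ n.primeFactors, p) * ∏ p ∈ m.primeFactors, (p - 1) =
      (∏ p ∈ m.primeFactors, p) * ∏ p ∈ n.primeFactors, (p - 1) := by
  have hm' := m.totient_mul_prod_primeFactors
  have hn' := n.totient_mul_prod_primeFactors
  refine Nat.eq_of_mul_eq_mul_left (Nat.pos_of_ne_zero (mul_ne_zero hm hn)) ?_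
  linear_combination (∏ p ∈ m.primeFactors, p) * m * hn' - (∏ p ∈ n.primeFactors, p) * n * hm' +
    (∏ p ∈ m.primeFactors, p) * (∏ p ∈ n.primeFactors, p) * h

theorem mem_primeFactors_of_totient_mul_eq {m n P : ℕ} (hm : m ≠ 0) (hn : n ≠ 0)
    (h : m.totient * n = n.totient * m) (hP : P ∈ m.primeFactors)
    (hmax : ∀ p ∈ m.primeFactors, p ≤ P) : P ∈ n.primeFactors := by
  have hPp := Nat.prime_of_mem_primeFactors hP
  have hdvd : P ∣ (∏ p ∈ n.primeFactors, p) * ∏ p ∈ m.primeFactors, (p - 1) := by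
    rw [prod_primeFactors_mul_prod_pred_eq hm hn h]
    exact (Finset.dvd_prod_of_mem _ hP).mul_right _
  rcases hPp.dvd_mul.1 hdvd with hd | hd
  · obtain ⟨p, hp, hPdvd⟩ := (Prime.dvd_finsetProd_iff hPp.prime _).1 hd
    rwa [(Nat.prime_dvd_prime_iff_eq hPp (Nat.prime_of_mem_primeFactors hp)).1 hPdvd]
  · obtain ⟨p, hp, hPdvd⟩ := (Prime.dvd_finsetProd_iff hPp.prime _).1 hd
    have := (Nat.prime_of_mem_primeFactors hp).two_le
    have := Nat.le_of_dvd (by lia) hPdvd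
    have := hmax p hp
    lia

-- The largest prime dividing either number divides both, hence is two.
theorem eq_two_of_mem_primeFactors_of_totient_mul_eq {m n p : ℕ} (hm : m ≠ 0) (hn : n ≠ 0)
    (hgcd : m.gcd n ∣ 2) (h : m.totient * n = n.totient * m)
    (hp : p ∈ m.primeFactors ∪ n.primeFactors) : p = 2 ∧ 2 ∈ m.primeFactors := by
  obtain ⟨P, hP, hmax⟩ := Finset.exists_max_image (m.primeFactors ∪ n.primeFactors) id ⟨p, hp⟩
  have hPmn : P ∈ m.primeFactors ∧ P ∈ n.primeFactors := by
    rcases Finset.mem_union.1 hP with hP | hP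
    · exact ⟨hP, mem_primeFactors_of_totient_mul_eq hm hn h hP fun p hp ↦
        hmax p (Finset.mem_union_left _ hp)⟩
    · exact ⟨mem_primeFactors_of_totient_mul_eq hn hm h.symm hP fun p hp ↦
        hmax p (Finset.mem_union_right _ hp), hP⟩
  obtain rfl : P = 2 := (Nat.prime_dvd_prime_iff_eq (Nat.prime_of_mem_primeFactors hPmn.1)
    Nat.prime_two).1 ((Nat.dvd_gcd (Nat.dvd_of_mem_primeFactors hPmn.1)
      (Nat.dvd_of_mem_primeFactors hPmn.2)).trans hgcd)
  have hp' : p.Prime := (Finset.mem_union.1 hp).elim Nat.prime_of_mem_primeFactors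
    Nat.prime_of_mem_primeFactors
  exact ⟨le_antisymm (hmax p hp) hp'.two_le, hPmn.1⟩

theorem eq_two_of_totient_mul_add_eq {m h : ℕ} (hm : m ≠ 0) (hh : h ≠ 0)
    (hgcd : m.gcd (m + h) ∣ 2) (heq : m.totient * (m + h) = (m + h).totient * m) : m = 2 := by
  have htwo (p) (hp : p ∈ m.primeFactors ∪ (m + h).primeFactors) :=
    eq_two_of_mem_primeFactors_of_totient_mul_eq hm (by lia) hgcd heq hp
  obtain ⟨i, hi⟩ : ∃ i, m = 2 ^ i := ⟨_, Nat.eq_prime_pow_of_unique_prime_dvd hm fun hp hpm ↦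
    (htwo _ <| Finset.mem_union_left _ <| Nat.mem_primeFactors.2 ⟨hp, hpm, hm⟩).1⟩
  obtain ⟨j, hj⟩ : ∃ j, m + h = 2 ^ j :=
    ⟨_, Nat.eq_prime_pow_of_unique_prime_dvd (by lia) fun hp hpm ↦
      (htwo _ <| Finset.mem_union_right _ <| Nat.mem_primeFactors.2 ⟨hp, hpm, by lia⟩).1⟩
  have hij : i < j := (Nat.pow_lt_pow_iff_right one_lt_two).1 (by lia)
  have hdvd : m ∣ 2 := by
    have hmn : m ∣ m + h := by
      rw [hj, hi]
      exact pow_dvd_pow 2 hij.le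
    rwa [Nat.gcd_eq_left hmn] at hgcd
  obtain ⟨p, hp, hpdvd⟩ := Nat.exists_prime_and_dvd (n := m + h) (by lia)
  have h2 := (htwo p <| Finset.mem_union_right _ <| Nat.mem_primeFactors.2 ⟨hp, hpdvd, by lia⟩).2
  exact Nat.dvd_antisymm hdvd (Nat.dvd_of_mem_primeFactors h2)

end Totient

/-- Two cofactorizations `N = m u` and `N + h = m' v` by primes `u = q a + 1` and `v = q b + 1`
which are both `1` modulo the prime `q`. A large prime `q` dividing `φ(N) = φ(N + h)` produces
such a pair unless `N` or `N + h` has a large square factor. -/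
structure LinkedFactorization (h q a b m m' N : ℕ) : Prop where
  prime : q.Prime
  prime_left : (q * a + 1).Prime
  prime_right : (q * b + 1).Prime
  eq_left : N = m * (q * a + 1)
  eq_right : N + h = m' * (q * b + 1)

namespace LinkedFactorization

variable {h q a b m m' N : ℕ}

theorem pos_left (H : LinkedFactorization h q a b m m' N) : 0 < a :=
  Nat.pos_of_ne_zero fun h0 ↦ Nat.not_prime_one (by simpa [h0] using H.prime_left)

theorem pos_right (H : LinkedFactorization h q a b m m' N) : 0 < b :=
  Nat.pos_of_ne_zero fun h0 ↦ Nat.not_prime_one (by simpa [h0] using H.prime_right)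

theorem dvd_left (H : LinkedFactorization h q a b m m' N) : q * a + 1 ∣ N :=
  Dvd.intro_left _ H.eq_left.symm

theorem dvd_right (H : LinkedFactorization h q a b m m' N) : q * b + 1 ∣ N + h :=
  Dvd.intro_left _ H.eq_right.symm

theorem gcd_cofactors_dvd (H : LinkedFactorization h q a b m m' N) : m.gcd m' ∣ N.gcd (N + h) :=
  Nat.dvd_gcd ((Nat.gcd_dvd_left ..).trans (Dvd.intro _ H.eq_left.symm))
    ((Nat.gcd_dvd_right ..).trans (Dvd.intro _ H.eq_right.symm))

theorem coprime (H : LinkedFactorization h q a b m m' N) (hgcd : N.gcd (N + h) ∣ 2) :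
    (q * a + 1).Coprime (q * b + 1) := by
  rw [Nat.coprime_primes H.prime_left H.prime_right]
  intro heq
  have hle := Nat.le_of_dvd two_pos
    ((Nat.dvd_gcd H.dvd_left (heq ▸ H.dvd_right)).trans hgcd)
  have := Nat.le_mul_of_pos_right q H.pos_left
  have := H.prime.two_le
  lia

theorem modEq_mul {n n' N' : ℕ} (H : LinkedFactorization h q a b m m' N)
    (H' : LinkedFactorization h q a b n n' N') (hgcd : N.gcd (N + h) ∣ 2) :
    N ≡ N' [MOD (q * a + 1) * (q * b + 1)] := by
  rw [← Nat.modEq_and_modEq_iff_modEq_mul (H.coprime hgcd)]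
  refine ⟨?_, Nat.ModEq.add_right_cancel' h ?_⟩
  · exact (Nat.modEq_zero_iff_dvd.2 H.dvd_left).trans (Nat.modEq_zero_iff_dvd.2 H'.dvd_left).symm
  · exact (Nat.modEq_zero_iff_dvd.2 H.dvd_right).trans
      (Nat.modEq_zero_iff_dvd.2 H'.dvd_right).symm

theorem modEq_mul_lcm {a' b' N' : ℕ} (H : LinkedFactorization h q a b m m' N)
    (H' : LinkedFactorization h q a' b' m m' N') : N ≡ N' [MOD q * m.lcm m'] := by
  rw [← Nat.lcm_mul_left, Nat.modEq_iff_dvd]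
  rw [← Int.natAbs_dvd_natAbs, Int.natAbs_natCast]
  refine Nat.lcm_dvd ?_ ?_ <;> rw [← Int.natCast_dvd]
  · refine ⟨a' - a, ?_⟩
    rw [H.eq_left, H'.eq_left]
    push_cast
    ring
  · refine ⟨b' - b, ?_⟩
    have e := congrArg (Nat.cast (R := ℤ)) H.eq_right
    have e' := congrArg (Nat.cast (R := ℤ)) H'.eq_right
    push_cast at e e' ⊢
    linear_combination e' - e

theorem dvd_sub (H : LinkedFactorization h q a b m m' N) : (q : ℤ) ∣ (m : ℤ) + h - m' := by
  refine ⟨m' * b - m * a, ?_⟩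
  have e := congrArg (Nat.cast (R := ℤ)) H.eq_left
  have e' := congrArg (Nat.cast (R := ℤ)) H.eq_right
  push_cast at e e'
  linear_combination e' - e

theorem mul_eq_mul (H : LinkedFactorization h q a b m (m + h) N) : m * a = (m + h) * b := by
  refine Nat.eq_of_mul_eq_mul_left H.prime.pos ?_
  linear_combination H.eq_right - H.eq_left

theorem totient_left (H : LinkedFactorization h q a b m m' N) (hsq : ¬ (q * a + 1) ^ 2 ∣ N) :
    N.totient = q * (a * m.totient) := by
  rw [H.eq_left] at hsq ⊢
  rw [totient_mul_of_prime_of_not_sq_dvd H.prime_left hsq, Nat.add_sub_cancel]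
  ring

theorem totient_right (H : LinkedFactorization h q a b m m' N)
    (hsq : ¬ (q * b + 1) ^ 2 ∣ N + h) : (N + h).totient = q * (b * m'.totient) := by
  rw [H.eq_right] at hsq ⊢
  rw [totient_mul_of_prime_of_not_sq_dvd H.prime_right hsq, Nat.add_sub_cancel]
  ring

theorem eq_two (H : LinkedFactorization h q a b m (m + h) N) (hN : N ≠ 0) (hh : h ≠ 0)
    (hgcd : N.gcd (N + h) ∣ 2) (htot : N.totient = (N + h).totient)
    (hsq : ¬ (q * a + 1) ^ 2 ∣ N) (hsq' : ¬ (q * b + 1) ^ 2 ∣ N + h) : m = 2 := by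
  have hm : m ≠ 0 := fun h0 ↦ hN (by simpa [h0] using H.eq_left)
  refine eq_two_of_totient_mul_add_eq hm hh (H.gcd_cofactors_dvd.trans hgcd) ?_
  have hab : a * m.totient = b * (m + h).totient := by
    rw [H.totient_left hsq, H.totient_right hsq'] at htot
    exact Nat.eq_of_mul_eq_mul_left H.prime.pos htot
  refine Nat.eq_of_mul_eq_mul_left (Nat.mul_pos H.pos_left H.pos_right) ?_
  linear_combination b * (m + h) * hab - b * (m + h).totient * H.mul_eq_mul

end LinkedFactorization

theorem smooth_or_sq_dvd_or_exists_linkedFactorization {N h : ℕ} (hN : N ≠ 0)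
    (htot : N.totient = (N + h).totient) (Q : ℕ) :
    (∀ r ∈ N.primeFactors, ∀ q ∈ (r - 1).primeFactors, q ≤ Q) ∨
      (∃ r > Q, r ^ 2 ∣ N ∨ r ^ 2 ∣ N + h) ∨
      ∃ q a b m m', Q < q ∧ LinkedFactorization h q a b m m' N := by
  by_cases hsmooth : ∀ r ∈ N.primeFactors, ∀ q ∈ (r - 1).primeFactors, q ≤ Q
  · exact Or.inl hsmooth
  push Not at hsmooth
  obtain ⟨r, hr, q, hq, hQq⟩ := hsmooth
  have hrp := Nat.prime_of_mem_primeFactors hr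
  obtain ⟨m, hm⟩ := Nat.dvd_of_mem_primeFactors hr
  obtain ⟨a, ha⟩ := Nat.dvd_of_mem_primeFactors hq
  have hqtot : q ∣ (N + h).totient := by
    rw [← htot]
    refine dvd_trans ?_ (Nat.totient_dvd_of_dvd (Nat.dvd_of_mem_primeFactors hr))
    exact Nat.totient_prime hrp ▸ Nat.dvd_of_mem_primeFactors hq
  have hqp := Nat.prime_of_mem_primeFactors hq
  refine Or.inr ((sq_dvd_or_exists_prime_of_dvd_totient hqp (by lia) hqtot).imp
    (fun hsq ↦ ⟨q, hQq, Or.inr hsq⟩) ?_)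
  rintro ⟨s, hs, b, hb⟩
  have hsp := Nat.prime_of_mem_primeFactors hs
  obtain ⟨m', hm'⟩ := Nat.dvd_of_mem_primeFactors hs
  obtain rfl : r = q * a + 1 := by have := hrp.pos; lia
  obtain rfl : s = q * b + 1 := by have := hsp.pos; lia
  exact ⟨q, a, b, m, m', hQq, hqp, hrp, hsp, by rw [hm, mul_comm], by rw [hm', mul_comm]⟩

section LinkedFactorizationCounting

open Finset

variable {A : Finset ℕ} {X h : ℕ}

theorem card_le_of_sq_dvd_add {Q : ℕ} (hQ : Q ≠ 0) (hA : A ⊆ Icc 1 X) (hh : h ≤ X)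
    (hsq : ∀ N ∈ A, ∃ r > Q, r ^ 2 ∣ N + h) : (#A : ℝ) ≤ 3 * X / Q := by
  have hle {N r : ℕ} (hN : N ∈ A) (hr : r ^ 2 ∣ N + h) : r ^ 2 ≤ 2 * X := by
    have := mem_Icc.1 (hA hN)
    have := Nat.le_of_dvd (by lia) hr
    lia
  have hcover : ∀ N ∈ A, ∃ r ∈ Ioc Q (2 * X), r ^ 2 ∣ N + h := fun N hN ↦ by
    obtain ⟨r, hQr, hr⟩ := hsq N hN
    exact ⟨r, mem_Ioc.2 ⟨hQr, (Nat.le_self_pow two_ne_zero r).trans (hle hN hr)⟩, hr⟩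
  have hcount : ∀ r ∈ Ioc Q (2 * X), ∀ F ⊆ A, (∀ N ∈ F, r ^ 2 ∣ N + h) →
      (#F : ℝ) ≤ 3 * X * (1 / (r : ℝ) ^ 2) := fun r hr F hF hdvd ↦ by
    have hr0 : 0 < r := by have := mem_Ioc.1 hr; lia
    have := card_le_of_modEq (A := F) (X := X) (D := r ^ 2) zero_le_two (by positivity)
      (fun N hN ↦ (mem_Icc.1 (hA (hF hN))).2)
      (fun ⟨N, hN⟩ ↦ mod_cast hle (hF hN) (hdvd N hN))
      (fun N hN N' hN' ↦ Nat.ModEq.add_right_cancel' h <|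
        (Nat.modEq_zero_iff_dvd.2 (hdvd N hN)).trans (Nat.modEq_zero_iff_dvd.2 (hdvd N' hN')).symm)
    push_cast at this
    linarith [this, show (1 + 2 : ℝ) * X / r ^ 2 = 3 * X * (1 / (r : ℝ) ^ 2) by ring]
  calc (#A : ℝ) ≤ ∑ r ∈ Ioc Q (2 * X), 3 * X * (1 / (r : ℝ) ^ 2) :=
        card_le_sum_of_forall_exists hcover hcount
    _ ≤ 3 * X * (1 / Q) := by
        rw [← mul_sum]
        gcongr
        exact sum_Ioc_one_div_sq_le hQ _
    _ = 3 * X / Q := by ring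

theorem card_le_of_sq_dvd {Q : ℕ} (hQ : Q ≠ 0) (hA : A ⊆ Icc 1 X) (hh : h ≤ X)
    (hsq : ∀ N ∈ A, ∃ r > Q, r ^ 2 ∣ N ∨ r ^ 2 ∣ N + h) : (#A : ℝ) ≤ 6 * X / Q := by
  have := card_le_add_of_forall_or (A := A) (P := fun N ↦ ∃ r > Q, r ^ 2 ∣ N + 0)
    (R := fun N ↦ ∃ r > Q, r ^ 2 ∣ N + h)
    (fun N hN ↦ by
      obtain ⟨r, hr, hdvd⟩ := hsq N hN
      exact hdvd.imp (fun hdvd ↦ ⟨r, hr, hdvd⟩) fun hdvd ↦ ⟨r, hr, hdvd⟩)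
    (fun F hF ↦ card_le_of_sq_dvd_add hQ (hF.trans hA) (Nat.zero_le X))
    (fun F hF ↦ card_le_of_sq_dvd_add hQ (hF.trans hA) hh)
  linarith [this, show (6 * X / Q : ℝ) = 3 * X / Q + 3 * X / Q by ring]

theorem card_le_of_modEq_mul_mul {F : Finset ℕ} {q a b : ℕ} {T : ℝ} (hT : 0 ≤ T)
    (hF : F ⊆ Icc 1 X) (hgcd : ∀ N ∈ F, N.gcd (N + h) ∣ 2)
    (hL : ∀ N ∈ F, ((q * a + 1) * (q * b + 1) : ℕ) ≤ T * X ∧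
      ∃ m m', LinkedFactorization h q a b m m' N) :
    (#F : ℝ) ≤ (1 + T) * X * (1 / (q : ℝ) ^ 2 * (1 / a * (1 / b))) := by
  rcases F.eq_empty_or_nonempty with rfl | ⟨N₀, hN₀⟩
  · simp only [card_empty, Nat.cast_zero]
    positivity
  obtain ⟨hle, m₀, m₀', H₀⟩ := hL N₀ hN₀
  have := H₀.prime.pos
  have := H₀.pos_left
  have := H₀.pos_right
  calc (#F : ℝ) ≤ (1 + T) * X / ((q * a + 1) * (q * b + 1) : ℕ) := by
        refine card_le_of_modEq hT (by positivity) (fun N hN ↦ (mem_Icc.1 (hF hN)).2)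
          (fun _ ↦ hle) fun N hN N' hN' ↦ ?_
        obtain ⟨-, m, m', H⟩ := hL N hN
        obtain ⟨-, n, n', H'⟩ := hL N' hN'
        exact H.modEq_mul H' (hgcd N hN)
    _ ≤ (1 + T) * X / (q ^ 2 * (a * b) : ℕ) := by
        have : q ^ 2 * (a * b) ≤ (q * a + 1) * (q * b + 1) := by
          linarith [Nat.zero_le (q * a + q * b),
            show (q * a + 1) * (q * b + 1) = q ^ 2 * (a * b) + (q * a + q * b) + 1 by ring]
        gcongr
    _ = (1 + T) * X * (1 / (q : ℝ) ^ 2 * (1 / a * (1 / b))) := by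
        push_cast
        field_simp

theorem card_le_of_linkedFactorization_small {Q : ℕ} {T : ℝ} (hQ : Q ≠ 0) (hT : 0 ≤ T)
    (hA : A ⊆ Icc 1 X) (hh : h ≤ X) (hgcd : ∀ N ∈ A, N.gcd (N + h) ∣ 2)
    (hL : ∀ N ∈ A, ∃ q a b m m', Q < q ∧ LinkedFactorization h q a b m m' N ∧
      ((q * a + 1) * (q * b + 1) : ℕ) ≤ T * X) :
    (#A : ℝ) ≤ (1 + T) * X / Q * (1 + Real.log (2 * X : ℕ)) ^ 2 := by
  have hcover : ∀ N ∈ A, ∃ i ∈ Ioc Q (2 * X) ×ˢ Icc 1 (2 * X) ×ˢ Icc 1 (2 * X),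
      ((i.1 * i.2.1 + 1) * (i.1 * i.2.2 + 1) : ℕ) ≤ T * X ∧
        ∃ m m', LinkedFactorization h i.1 i.2.1 i.2.2 m m' N := fun N hN ↦ by
    obtain ⟨q, a, b, m, m', hQq, H, hle⟩ := hL N hN
    refine ⟨(q, a, b), ?_, hle, m, m', H⟩
    have := mem_Icc.1 (hA hN)
    have := Nat.le_of_dvd (by lia) H.dvd_left
    have := Nat.le_of_dvd (by lia) H.dvd_right
    have := Nat.le_mul_of_pos_right q H.pos_left
    have := Nat.le_mul_of_pos_left a H.prime.pos
    have := Nat.le_mul_of_pos_left b H.prime.pos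
    simp only [mem_product, mem_Ioc, mem_Icc]
    exact ⟨⟨hQq, by lia⟩, ⟨H.pos_left, by lia⟩, ⟨H.pos_right, by lia⟩⟩
  calc (#A : ℝ) ≤ ∑ i ∈ Ioc Q (2 * X) ×ˢ Icc 1 (2 * X) ×ˢ Icc 1 (2 * X),
        (1 + T) * X * (1 / (i.1 : ℝ) ^ 2 * (1 / i.2.1 * (1 / i.2.2))) :=
        card_le_sum_of_forall_exists hcover fun i _ F hF ↦
          card_le_of_modEq_mul_mul hT (hF.trans hA) fun N hN ↦ hgcd N (hF hN)
    _ = (1 + T) * X * ((∑ q ∈ Ioc Q (2 * X), 1 / (q : ℝ) ^ 2) *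
          (∑ a ∈ Icc 1 (2 * X), (1 : ℝ) / a) ^ 2) := by
        simp only [sum_product, ← mul_sum, ← sum_mul]
        ring
    _ ≤ (1 + T) * X * (1 / Q * (1 + Real.log (2 * X : ℕ)) ^ 2) := by
        gcongr
        · exact sum_Ioc_one_div_sq_le hQ _
        · exact sum_Icc_one_div_le_one_add_log _
    _ = (1 + T) * X / Q * (1 + Real.log (2 * X : ℕ)) ^ 2 := by ring

theorem LinkedFactorization.mul_cofactors_le {q a b m m' N : ℕ} {T : ℝ}
    (H : LinkedFactorization h q a b m m' N) (hN : N ∈ Icc 1 X) (hh : h ≤ X)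
    (hlt : T * X < ((q * a + 1) * (q * b + 1) : ℕ)) : T * (m * m') ≤ 2 * X := by
  have hN := mem_Icc.1 hN
  have hX : (0 : ℝ) < X := by exact_mod_cast (by lia : 0 < X)
  have hprod : m * m' * ((q * a + 1) * (q * b + 1)) ≤ X * (2 * X) :=
    calc m * m' * ((q * a + 1) * (q * b + 1)) = N * (N + h) := by
          linear_combination
            m' * (q * b + 1) * H.eq_left.symm + N * H.eq_right.symm
      _ ≤ X * (2 * X) := Nat.mul_le_mul (by lia) (by lia)
  refine le_of_mul_le_mul_left ?_ hX
  calc X * (T * (m * m')) = m * m' * (T * X) := by ring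
    _ ≤ m * m' * ((q * a + 1) * (q * b + 1) : ℕ) := by gcongr
    _ ≤ X * (2 * X) := mod_cast hprod

theorem mul_le_two_mul_lcm {m m' : ℕ} (hgcd : m.gcd m' ∣ 2) : m * m' ≤ 2 * m.lcm m' := by
  rw [← Nat.gcd_mul_lcm m m']
  gcongr
  exact Nat.le_of_dvd two_pos hgcd

theorem card_le_of_modEq_mul_lcm {F : Finset ℕ} {q m m' : ℕ} {T : ℝ} (hT : 0 < T)
    (hF : F ⊆ Icc 1 X) (hh : h ≤ X) (hgcd : ∀ N ∈ F, N.gcd (N + h) ∣ 2)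
    (hL : ∀ N ∈ F, ∃ a b, T ≤ q ∧ LinkedFactorization h q a b m m' N ∧
      T * X < ((q * a + 1) * (q * b + 1) : ℕ)) :
    (#F : ℝ) ≤ 4 * X / T * (1 / m * (1 / m')) := by
  rcases F.eq_empty_or_nonempty with rfl | ⟨N₀, hN₀⟩
  · simp only [card_empty, Nat.cast_zero]
    positivity
  obtain ⟨a₀, b₀, hTq, H₀, hlt⟩ := hL N₀ hN₀
  have hN₀X := mem_Icc.1 (hF hN₀)
  have hm : 0 < m := Nat.pos_of_ne_zero fun h0 ↦ by
    have := H₀.eq_left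
    simp only [h0, zero_mul] at this
    lia
  have hm' : 0 < m' := Nat.pos_of_ne_zero fun h0 ↦ by
    have := H₀.eq_right
    simp only [h0, zero_mul] at this
    lia
  have hlcm : (m * m' : ℝ) ≤ 2 * m.lcm m' := mod_cast
    mul_le_two_mul_lcm (H₀.gcd_cofactors_dvd.trans (hgcd N₀ hN₀))
  have hone : 1 ≤ 2 * X / (T * (m * m')) := by
    rw [one_le_div (by positivity)]
    exact H₀.mul_cofactors_le (hF hN₀) hh hlt
  calc (#F : ℝ) ≤ X / (q * m.lcm m' : ℕ) + 1 :=
        card_le_div_add_one_of_modEq (fun N hN ↦ (mem_Icc.1 (hF hN)).2) fun N hN N' hN' ↦ by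
          obtain ⟨a, b, -, H, -⟩ := hL N hN
          obtain ⟨a', b', -, H', -⟩ := hL N' hN'
          exact H.modEq_mul_lcm H'
    _ ≤ X / (T * (m * m' / 2)) + 2 * X / (T * (m * m')) := by
        push_cast
        gcongr
        linarith
    _ = 4 * X / T * (1 / m * (1 / m')) := by
        field_simp
        ring

theorem card_le_of_linkedFactorization_cofactors {F : Finset ℕ} {m m' : ℕ} {T : ℝ} (hT : 0 < T)
    (hF : F ⊆ Icc 1 X) (hh : h ≤ X) (hgcd : ∀ N ∈ F, N.gcd (N + h) ∣ 2)
    (hL : ∀ N ∈ F, m' ≠ m + h ∧ ∃ q a b : ℕ, T ≤ q ∧ LinkedFactorization h q a b m m' N ∧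
      T * X < ((q * a + 1) * (q * b + 1) : ℕ)) :
    (#F : ℝ) ≤ 2 * Real.log (2 * X : ℕ) * (4 * X / T * (1 / m * (1 / m'))) := by
  rcases F.eq_empty_or_nonempty with rfl | ⟨N₀, hN₀⟩
  · have := Real.log_natCast_nonneg (2 * X)
    simp only [card_empty, Nat.cast_zero]
    positivity
  obtain ⟨hne, q₀, a₀, b₀, -, H₀, -⟩ := hL N₀ hN₀
  have hN₀X := mem_Icc.1 (hF hN₀)
  have hd : ((m : ℤ) + h - m').natAbs ≠ 0 := by lia
  have hdX : ((m : ℤ) + h - m').natAbs ≤ 2 * X := by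
    have := Nat.le_of_dvd (by lia) (Dvd.intro _ H₀.eq_left.symm)
    have := Nat.le_of_dvd (by lia) (Dvd.intro _ H₀.eq_right.symm)
    lia
  have hcover : ∀ N ∈ F, ∃ q ∈ ((m : ℤ) + h - m').natAbs.primeFactors, ∃ a b,
      T ≤ q ∧ LinkedFactorization h q a b m m' N ∧ T * X < ((q * a + 1) * (q * b + 1) : ℕ) :=
    fun N hN ↦ by
      obtain ⟨-, q, a, b, hTq, H, hlt⟩ := hL N hN
      refine ⟨q, Nat.mem_primeFactors.2 ⟨H.prime, ?_, hd⟩, a, b, hTq, H, hlt⟩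
      exact Int.natCast_dvd.1 H.dvd_sub
  calc (#F : ℝ) ≤ ∑ _q ∈ ((m : ℤ) + h - m').natAbs.primeFactors,
        4 * X / T * (1 / m * (1 / m')) :=
        card_le_sum_of_forall_exists hcover fun q _ G hG ↦
          card_le_of_modEq_mul_lcm hT (hG.trans hF) hh fun N hN ↦ hgcd N (hG hN)
    _ = #((m : ℤ) + h - m').natAbs.primeFactors * (4 * X / T * (1 / m * (1 / m'))) := by
        rw [sum_const, nsmul_eq_mul]
    _ ≤ 2 * Real.log (2 * X : ℕ) * (4 * X / T * (1 / m * (1 / m'))) := by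
        gcongr
        exact card_primeFactors_le_two_mul_log hd hdX

theorem card_le_of_linkedFactorization_large {T : ℝ} (hT : 0 < T)
    (hA : A ⊆ Icc 1 X) (hh : h ≤ X) (hgcd : ∀ N ∈ A, N.gcd (N + h) ∣ 2)
    (hL : ∀ N ∈ A, ∃ q a b m m' : ℕ, T ≤ q ∧ LinkedFactorization h q a b m m' N ∧
      T * X < ((q * a + 1) * (q * b + 1) : ℕ) ∧ m' ≠ m + h) :
    (#A : ℝ) ≤ 8 * X / T * (1 + Real.log (2 * X : ℕ)) ^ 2 * Real.log (2 * X : ℕ) := by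
  have hcover : ∀ N ∈ A, ∃ i ∈ Icc 1 (2 * X) ×ˢ Icc 1 (2 * X), i.2 ≠ i.1 + h ∧
      ∃ q a b : ℕ, T ≤ q ∧ LinkedFactorization h q a b i.1 i.2 N ∧
        T * X < ((q * a + 1) * (q * b + 1) : ℕ) := fun N hN ↦ by
    obtain ⟨q, a, b, m, m', hTq, H, hlt, hne⟩ := hL N hN
    refine ⟨(m, m'), ?_, hne, q, a, b, hTq, H, hlt⟩
    have := mem_Icc.1 (hA hN)
    have hm := Nat.pos_of_dvd_of_pos (Dvd.intro _ H.eq_left.symm) (by lia)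
    have hm' := Nat.pos_of_dvd_of_pos (Dvd.intro _ H.eq_right.symm) (by lia)
    have := Nat.le_of_dvd (by lia) (Dvd.intro _ H.eq_left.symm)
    have := Nat.le_of_dvd (by lia) (Dvd.intro _ H.eq_right.symm)
    simp only [mem_product, mem_Icc]
    lia
  calc (#A : ℝ) ≤ ∑ i ∈ Icc 1 (2 * X) ×ˢ Icc 1 (2 * X),
        2 * Real.log (2 * X : ℕ) * (4 * X / T * (1 / i.1 * (1 / i.2))) :=
        card_le_sum_of_forall_exists hcover fun i _ F hF hFL ↦
          card_le_of_linkedFactorization_cofactors hT (hF.trans hA) hh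
            (fun N hN ↦ hgcd N (hF hN)) hFL
    _ = 2 * Real.log (2 * X : ℕ) * (4 * X / T * (∑ a ∈ Icc 1 (2 * X), (1 : ℝ) / a) ^ 2) := by
        simp only [sum_product, ← mul_sum, ← sum_mul]
        ring
    _ ≤ 2 * Real.log (2 * X : ℕ) * (4 * X / T * (1 + Real.log (2 * X : ℕ)) ^ 2) := by
        have := Real.log_natCast_nonneg (2 * X)
        gcongr
        exact sum_Icc_one_div_le_one_add_log _
    _ = 8 * X / T * (1 + Real.log (2 * X : ℕ)) ^ 2 * Real.log (2 * X : ℕ) := by ring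

end LinkedFactorizationCounting

section SmoothShiftedPrimes

open Finset

theorem sum_prime_Ioc_two_pow_one_div_le {J : ℕ} (hJ : J ≠ 0) :
    ∑ p ∈ Ioc (2 ^ J : ℕ) (2 ^ (J + 1)) with p.Prime, (1 : ℝ) / p ≤ 4 * (1 / J) := by
  have : 0 < Real.log 2 := Real.log_pos one_lt_two
  have hlog4 : Real.log 4 = 2 * Real.log 2 := by
    rw [show (4 : ℝ) = 2 ^ 2 by norm_num, Real.log_pow, Nat.cast_ofNat]
  have htheta : ∑ p ∈ Ioc (2 ^ J : ℕ) (2 ^ (J + 1)) with p.Prime, Real.log p ≤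
      Real.log 4 * (2 ^ (J + 1) : ℕ) := by
    refine le_trans ?_ (Chebyshev.theta_le_log4_mul_x (by positivity))
    rw [Chebyshev.theta_eq_sum_Icc, Nat.floor_natCast]
    exact sum_le_sum_of_subset_of_nonneg (filter_subset_filter _ fun p hp ↦ by
      simp only [mem_Ioc, mem_Icc] at hp ⊢; lia) fun p _ _ ↦ Real.log_natCast_nonneg p
  have hterm (p : ℕ) (hp : p ∈ (Ioc (2 ^ J : ℕ) (2 ^ (J + 1))).filter Nat.Prime) :
      (1 : ℝ) / p ≤ Real.log p * (1 / (2 ^ J * (J * Real.log 2))) := by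
    have hp2 : (2 : ℝ) ^ J ≤ p := mod_cast (mem_Ioc.1 (mem_filter.1 hp).1).1.le
    have hp0 : (0 : ℝ) < p := lt_of_lt_of_le (by positivity) hp2
    have hlog : J * Real.log 2 ≤ Real.log p := by
      rw [← Real.log_pow]
      exact Real.log_le_log (by positivity) hp2
    rw [mul_one_div, div_le_div_iff₀ hp0 (by positivity), one_mul, mul_comm]
    gcongr
  calc ∑ p ∈ Ioc (2 ^ J : ℕ) (2 ^ (J + 1)) with p.Prime, (1 : ℝ) / p
      ≤ (∑ p ∈ Ioc (2 ^ J : ℕ) (2 ^ (J + 1)) with p.Prime, Real.log p) *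
          (1 / (2 ^ J * (J * Real.log 2))) := by
        rw [sum_mul]
        exact sum_le_sum hterm
    _ ≤ Real.log 4 * (2 ^ (J + 1) : ℕ) * (1 / (2 ^ J * (J * Real.log 2))) := by gcongr
    _ = 4 * (1 / J) := by
        rw [hlog4, pow_succ]
        push_cast
        field_simp
        norm_num

theorem sum_prime_one_div_le {J : ℕ} (hJ : J ≠ 0) :
    ∑ p ∈ Ioc 0 (2 ^ J : ℕ) with p.Prime, (1 : ℝ) / p ≤ 5 + 4 * Real.log J := by
  have hdyadic : ∑ p ∈ Ioc 0 (2 ^ J : ℕ) with p.Prime, (1 : ℝ) / p ≤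
      1 + 4 * ∑ j ∈ Ico 1 J, (1 : ℝ) / j := by
    induction J, Nat.one_le_iff_ne_zero.2 hJ using Nat.le_induction with
    | base =>
      rw [show (Ioc 0 (2 ^ 1)).filter Nat.Prime = {2} by decide]
      norm_num
    | succ j hj ih =>
      have hj0 := Nat.one_le_iff_ne_zero.1 hj
      have hblock := sum_prime_Ioc_two_pow_one_div_le hj0
      have hprev := ih hj0
      rw [sum_filter] at hblock hprev ⊢
      rw [← sum_Ioc_consecutive _ (Nat.zero_le (2 ^ j)) (by gcongr <;> lia),
        sum_Ico_succ_top hj]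
      linarith
  have hharm : ∑ j ∈ Ico 1 J, (1 : ℝ) / j ≤ ∑ j ∈ Icc 1 J, (1 : ℝ) / j :=
    sum_le_sum_of_subset_of_nonneg Ico_subset_Icc_self fun _ _ _ ↦ by positivity
  linarith [sum_Icc_one_div_le_one_add_log J]

theorem inv_one_sub_le_exp {t : ℝ} (h0 : 0 ≤ t) (h1 : t ≤ 3 / 4) :
    (1 - t)⁻¹ ≤ Real.exp (4 * t) := by
  rw [inv_le_iff_one_le_mul₀ (by linarith)]
  calc (1 : ℝ) ≤ (4 * t + 1) * (1 - t) := by nlinarith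
    _ ≤ Real.exp (4 * t) * (1 - t) := by
        gcongr
        · linarith
        · exact Real.add_one_le_exp _

theorem natCast_rpow_neg_le_of_prime {σ : ℝ} (hσ : 1 / 2 ≤ σ) {p : ℕ} (hp : p.Prime) :
    (p : ℝ) ^ (-σ) ≤ 3 / 4 :=
  calc (p : ℝ) ^ (-σ) ≤ (2 : ℝ) ^ (-σ) :=
        Real.rpow_le_rpow_of_nonpos two_pos (mod_cast hp.two_le) (by linarith)
    _ ≤ (2 : ℝ) ^ (-(1 / 2) : ℝ) := Real.rpow_le_rpow_of_exponent_le one_le_two (by linarith)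
    _ ≤ 3 / 4 := by
        rw [Real.rpow_neg two_pos.le, ← Real.sqrt_eq_rpow,
          inv_le_comm₀ (by positivity) (by norm_num)]
        exact Real.le_sqrt_of_sq_le (by norm_num)

theorem sum_rpow_neg_le_exp_of_mem_factoredNumbers {σ : ℝ} (hσ : 1 / 2 ≤ σ) {s F : Finset ℕ}
    (hF : ∀ m ∈ F, m ∈ Nat.factoredNumbers s) :
    ∑ m ∈ F, (m : ℝ) ^ (-σ) ≤ Real.exp (4 * ∑ p ∈ s with p.Prime, (p : ℝ) ^ (-σ)) := by
  let f : ℕ →* ℝ :=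
    { toFun := fun m ↦ (m : ℝ) ^ (-σ)
      map_one' := by simp
      map_mul' := fun a b ↦ by
        push_cast
        exact Real.mul_rpow a.cast_nonneg b.cast_nonneg }
  have hf0 (m : ℕ) : 0 ≤ f m := Real.rpow_nonneg m.cast_nonneg _
  have hf {p : ℕ} (hp : p.Prime) : f p ≤ 3 / 4 := natCast_rpow_neg_le_of_prime hσ hp
  obtain ⟨-, hsum⟩ :=
    EulerProduct.summable_and_hasSum_factoredNumbers_prod_filter_prime_geometric (f := f)
      (fun {p} hp ↦ by rw [Real.norm_of_nonneg (hf0 p)]; linarith [hf hp]) s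
  have hEuler := sum_le_hasSum (F.subtype (· ∈ Nat.factoredNumbers s)) (fun i _ ↦ hf0 i) hsum
  rw [sum_subtype_of_mem (fun m ↦ f m) hF] at hEuler
  refine hEuler.trans ?_
  rw [mul_sum, Real.exp_sum]
  refine prod_le_prod (fun p hp ↦ ?_) fun p hp ↦
    inv_one_sub_le_exp (hf0 p) (hf (mem_filter.1 hp).2)
  rw [inv_nonneg]
  linarith [hf (mem_filter.1 hp).2]

theorem sum_prime_rpow_neg_le {J : ℕ} (hJ : J ≠ 0) :
    ∑ p ∈ Ioc 0 (2 ^ J : ℕ) with p.Prime, (p : ℝ) ^ (-(1 - 1 / J) : ℝ) ≤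
      2 * (5 + 4 * Real.log J) := by
  have hterm (p : ℕ) (hp : p ∈ (Ioc 0 (2 ^ J : ℕ)).filter Nat.Prime) :
      (p : ℝ) ^ (-(1 - 1 / J) : ℝ) ≤ 2 * (1 / p) := by
    obtain ⟨hp0, hpJ⟩ := mem_Ioc.1 (mem_filter.1 hp).1
    have hp0 : (0 : ℝ) < p := mod_cast hp0
    calc (p : ℝ) ^ (-(1 - 1 / J) : ℝ) = (p : ℝ) ^ (1 / J : ℝ) * (1 / p) := by
          rw [show (-(1 - 1 / J) : ℝ) = 1 / J + -1 by ring, Real.rpow_add hp0,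
            Real.rpow_neg_one, one_div (p : ℝ)]
      _ ≤ ((2 : ℝ) ^ J) ^ (1 / J : ℝ) * (1 / p) := by
          gcongr
          exact_mod_cast hpJ
      _ = 2 * (1 / p) := by rw [one_div (J : ℝ), Real.pow_rpow_inv_natCast two_pos.le hJ]
  calc ∑ p ∈ Ioc 0 (2 ^ J : ℕ) with p.Prime, (p : ℝ) ^ (-(1 - 1 / J) : ℝ)
      ≤ 2 * ∑ p ∈ Ioc 0 (2 ^ J : ℕ) with p.Prime, (1 : ℝ) / p := by
        rw [mul_sum]
        exact sum_le_sum hterm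
    _ ≤ 2 * (5 + 4 * Real.log J) := by gcongr; exact sum_prime_one_div_le hJ

theorem sum_rpow_neg_le_of_pred_smooth {J : ℕ} (hJ : 2 ≤ J) {S : Finset ℕ}
    (hS : ∀ r ∈ S, r.Prime ∧ ∀ q ∈ (r - 1).primeFactors, q ≤ 2 ^ J) :
    ∑ r ∈ S, (r : ℝ) ^ (-(1 - 1 / J) : ℝ) ≤ Real.exp 40 * (J : ℝ) ^ 32 := by
  have hJ2 : (2 : ℝ) ≤ J := mod_cast hJ
  have hσ : (1 : ℝ) / 2 ≤ 1 - 1 / J := by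
    linarith [one_div_le_one_div_of_le two_pos hJ2]
  have hmem : ∀ m ∈ S.image (fun r : ℕ ↦ r - 1), m ∈ Nat.factoredNumbers (Ioc 0 (2 ^ J : ℕ)) := by
    intro m hm
    obtain ⟨r, hr, rfl⟩ := mem_image.1 hm
    refine Nat.mem_factoredNumbers.2 ⟨by have := (hS r hr).1.two_le; lia, fun q hq ↦ ?_⟩
    exact mem_Ioc.2 ⟨(Nat.prime_of_mem_primeFactorsList hq).pos,
      (hS r hr).2 q (List.mem_toFinset.2 hq)⟩
  calc ∑ r ∈ S, (r : ℝ) ^ (-(1 - 1 / J) : ℝ)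
      ≤ ∑ r ∈ S, ((r - 1 : ℕ) : ℝ) ^ (-(1 - 1 / J) : ℝ) := sum_le_sum fun r hr ↦ by
        have : 0 < r - 1 := by have := (hS r hr).1.two_le; lia
        exact Real.rpow_le_rpow_of_nonpos (by positivity) (by gcongr; lia) (by linarith)
    _ = ∑ m ∈ S.image (fun r : ℕ ↦ r - 1), (m : ℝ) ^ (-(1 - 1 / J) : ℝ) :=
        .symm <| sum_image fun r hr r' hr' (hrr' : r - 1 = r' - 1) ↦ by
          have := (hS r hr).1.pos
          have := (hS r' hr').1.pos
          lia
    _ ≤ Real.exp (4 * ∑ p ∈ Ioc 0 (2 ^ J : ℕ) with p.Prime, (p : ℝ) ^ (-(1 - 1 / J) : ℝ)) :=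
        sum_rpow_neg_le_exp_of_mem_factoredNumbers hσ hmem
    _ ≤ Real.exp (40 + (32 : ℕ) * Real.log J) := by
        rw [Real.exp_le_exp]
        push_cast
        linarith [sum_prime_rpow_neg_le (J := J) (by lia)]
    _ = Real.exp 40 * (J : ℝ) ^ 32 := by
        rw [Real.exp_add, Real.exp_nat_mul, Real.exp_log (by positivity)]

-- Rankin's trick, applied to the primes `r` and once more to the smooth numbers `r - 1`.
theorem card_le_of_pred_primeFactors_smooth {J X : ℕ} (hJ : 2 ≤ J) {A : Finset ℕ}
    (hA : A ⊆ Icc 1 X)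
    (hsmooth : ∀ N ∈ A, ∀ r ∈ N.primeFactors, ∀ q ∈ (r - 1).primeFactors, q ≤ 2 ^ J) :
    (#A : ℝ) ≤ (X : ℝ) ^ (1 - 1 / J : ℝ) * Real.exp (4 * Real.exp 40 * (J : ℝ) ^ 32) := by
  have hJ2 : (2 : ℝ) ≤ J := mod_cast hJ
  set σ : ℝ := 1 - 1 / J
  have hσ : 1 / 2 ≤ σ := by linarith [one_div_le_one_div_of_le two_pos hJ2]
  have hprime {r : ℕ} (hr : r ∈ A.biUnion Nat.primeFactors) :
      r.Prime ∧ ∀ q ∈ (r - 1).primeFactors, q ≤ 2 ^ J := by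
    obtain ⟨N, hN, hrN⟩ := mem_biUnion.1 hr
    exact ⟨Nat.prime_of_mem_primeFactors hrN, hsmooth N hN r hrN⟩
  have hfactored : ∀ N ∈ A, N ∈ Nat.factoredNumbers (A.biUnion Nat.primeFactors) := fun N hN ↦
    Nat.mem_factoredNumbers.2 ⟨by have := mem_Icc.1 (hA hN); lia, fun r hr ↦
      mem_biUnion.2 ⟨N, hN, List.mem_toFinset.2 hr⟩⟩
  calc (#A : ℝ) = ∑ _ ∈ A, (1 : ℝ) := by simp
    _ ≤ ∑ N ∈ A, (X : ℝ) ^ σ * (N : ℝ) ^ (-σ) := sum_le_sum fun N hN ↦ by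
        have hN := mem_Icc.1 (hA hN)
        have hN0 : (0 : ℝ) < N := mod_cast hN.1
        rw [Real.rpow_neg hN0.le, ← div_eq_mul_inv, one_le_div (by positivity)]
        gcongr
        exact hN.2
    _ ≤ (X : ℝ) ^ σ *
          Real.exp (4 * ∑ r ∈ A.biUnion Nat.primeFactors with r.Prime, (r : ℝ) ^ (-σ)) := by
        rw [← mul_sum]
        gcongr
        exact sum_rpow_neg_le_exp_of_mem_factoredNumbers hσ hfactored
    _ ≤ (X : ℝ) ^ σ * Real.exp (4 * Real.exp 40 * (J : ℝ) ^ 32) := by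
        rw [mul_assoc 4]
        gcongr
        exact sum_rpow_neg_le_of_pred_smooth hJ fun r hr ↦ hprime (mem_filter.1 hr).1

end SmoothShiftedPrimes

section SelbergSieve

open Finset BoundingSieve
open scoped ArithmeticFunction.Moebius

theorem sum_divisors_moebius_of_dvd {e l : ℕ} (he : Squarefree e) :
    ∑ d ∈ e.divisors, (if l ∣ d then (μ d : ℝ) else 0) = if l = e then (μ l : ℝ) else 0 := by
  by_cases hle : l ∣ e
  swap
  · rw [if_neg (by rintro rfl; exact hle dvd_rfl)]
    exact sum_eq_zero fun d hd ↦ if_neg fun h ↦ hle (h.trans (Nat.dvd_of_mem_divisors hd))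
  obtain ⟨f, rfl⟩ := hle
  obtain ⟨hl0, hf0⟩ := mul_ne_zero_iff.1 he.ne_zero
  have hset : {d ∈ (l * f).divisors | l ∣ d} = f.divisors.image (l * ·) := by
    ext d
    simp only [mem_filter, Nat.mem_divisors, mem_image]
    constructor
    · rintro ⟨⟨hd, -⟩, c, rfl⟩
      exact ⟨c, ⟨Nat.dvd_of_mul_dvd_mul_left (Nat.pos_of_ne_zero hl0) hd, hf0⟩, rfl⟩
    · rintro ⟨c, ⟨hc, -⟩, rfl⟩
      exact ⟨⟨Nat.mul_dvd_mul_left l hc, he.ne_zero⟩, dvd_mul_right l c⟩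
  have hmul (x) (hx : x ∈ f.divisors) : (μ (l * x) : ℝ) = μ l * μ x := by
    rw [ArithmeticFunction.isMultiplicative_moebius.map_mul_of_coprime
      ((Nat.coprime_of_squarefree_mul he).coprime_dvd_right (Nat.dvd_of_mem_divisors hx)),
      Int.cast_mul]
  have hsum : ∑ x ∈ f.divisors, (μ x : ℝ) = if f = 1 then 1 else 0 := by
    have h := congrArg (· f) ArithmeticFunction.moebius_mul_coe_zeta
    simp only [ArithmeticFunction.coe_mul_zeta_apply, ArithmeticFunction.one_apply] at h
    exact_mod_cast h
  rw [← sum_filter, hset, sum_image fun _ _ _ _ h ↦ Nat.eq_of_mul_eq_mul_left (by lia) h,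
    sum_congr rfl hmul, ← mul_sum, hsum]
  simp [hl0]

theorem errSum_lambdaSquared_le (s : BoundingSieve) (w : ℕ → ℝ) :
    s.errSum (lambdaSquared w) ≤ ∑ d₁ ∈ s.prodPrimes.divisors, ∑ d₂ ∈ s.prodPrimes.divisors,
      |w d₁| * |w d₂| * |s.rem (d₁.lcm d₂)| := by
  set D := s.prodPrimes.divisors with hD
  have hterm (d) (hd : d ∈ D) : |lambdaSquared w d| * |s.rem d| ≤
      ∑ d₁ ∈ D, ∑ d₂ ∈ D, if d = d₁.lcm d₂ then |w d₁| * |w d₂| * |s.rem d| else 0 := by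
    have hsub : d.divisors ⊆ D :=
      Nat.divisors_subset_of_dvd prodPrimes_ne_zero (Nat.dvd_of_mem_divisors hd)
    calc |lambdaSquared w d| * |s.rem d|
        ≤ (∑ d₁ ∈ d.divisors, ∑ d₂ ∈ d.divisors,
            |if d = d₁.lcm d₂ then w d₁ * w d₂ else 0|) * |s.rem d| := by
          gcongr
          exact (abs_sum_le_sum_abs _ _).trans (sum_le_sum fun _ _ ↦ abs_sum_le_sum_abs _ _)
      _ ≤ (∑ d₁ ∈ D, ∑ d₂ ∈ D, |if d = d₁.lcm d₂ then w d₁ * w d₂ else 0|) * |s.rem d| := by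
          gcongr
          refine (sum_le_sum fun d₁ _ ↦ ?_).trans
            (sum_le_sum_of_subset_of_nonneg hsub fun _ _ _ ↦ sum_nonneg fun _ _ ↦ abs_nonneg _)
          exact sum_le_sum_of_subset_of_nonneg hsub fun _ _ _ ↦ abs_nonneg _
      _ = ∑ d₁ ∈ D, ∑ d₂ ∈ D, if d = d₁.lcm d₂ then |w d₁| * |w d₂| * |s.rem d| else 0 := by
          simp only [sum_mul, apply_ite abs, abs_mul, abs_zero, ite_mul, zero_mul]
  refine (sum_le_sum hterm).trans_eq ?_
  rw [sum_comm]
  refine sum_congr rfl fun d₁ h₁ ↦ ?_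
  rw [sum_comm]
  refine sum_congr rfl fun d₂ h₂ ↦ ?_
  rw [sum_ite_eq', if_pos]
  rw [hD, Nat.mem_divisors] at h₁ h₂ ⊢
  exact ⟨Nat.lcm_dvd h₁.1 h₂.1, h₁.2⟩

/-- The divisors of the sifting product up to the level `R`, on which Selberg's weights live. -/
def selbergSupport (s : BoundingSieve) (R : ℕ) : Finset ℕ :=
  {l ∈ s.prodPrimes.divisors | l ≤ R}

/-- The sum `S(R)` of `selbergTerms` up to the level `R`; Selberg's sieve saves the factor
`1 / S(R)`. -/
noncomputable def selbergSum (s : BoundingSieve) (R : ℕ) : ℝ :=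
  ∑ l ∈ selbergSupport s R, s.selbergTerms l

/-- Selberg's optimal weights, the minimisers of the quadratic form
`s.mainSum (lambdaSquared w)` among the `w` supported on `[1, R]` with `w 1 = 1`. -/
noncomputable def selbergWeight (s : BoundingSieve) (R d : ℕ) : ℝ :=
  μ d * (s.nu d)⁻¹ * (selbergSum s R)⁻¹ *
    ∑ l ∈ selbergSupport s R, if d ∣ l then s.selbergTerms l else 0

variable {s : BoundingSieve} {R l d : ℕ}

theorem dvd_of_mem_selbergSupport (hl : l ∈ selbergSupport s R) : l ∣ s.prodPrimes :=
  Nat.dvd_of_mem_divisors (mem_filter.1 hl).1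

theorem mem_selbergSupport (hl : l ∣ s.prodPrimes) (hR : l ≤ R) : l ∈ selbergSupport s R :=
  mem_filter.2 ⟨Nat.mem_divisors.2 ⟨hl, prodPrimes_ne_zero⟩, hR⟩

theorem pos_of_mem_selbergSupport (hl : l ∈ selbergSupport s R) : 0 < l :=
  Nat.pos_of_dvd_of_pos (dvd_of_mem_selbergSupport hl) (Nat.pos_of_ne_zero prodPrimes_ne_zero)

theorem selbergSupport_subset : selbergSupport s R ⊆ s.prodPrimes.divisors :=
  filter_subset _ _

theorem selbergTerms_pos_of_mem_selbergSupport (hl : l ∈ selbergSupport s R) :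
    0 < s.selbergTerms l :=
  selbergTerms_pos (dvd_of_mem_selbergSupport hl)

theorem selbergSum_pos (hR : 1 ≤ R) : 0 < selbergSum s R :=
  sum_pos (fun _ ↦ selbergTerms_pos_of_mem_selbergSupport)
    ⟨1, mem_selbergSupport (one_dvd _) hR⟩

theorem selbergWeight_one (hR : 1 ≤ R) : selbergWeight s R 1 = 1 := by
  have hS : ∑ l ∈ selbergSupport s R, s.selbergTerms l ≠ 0 := (selbergSum_pos hR).ne'
  simp [selbergWeight, selbergSum, s.nu_mult.map_one, hS]

theorem selbergWeight_eq_zero_of_lt (hd : R < d) : selbergWeight s R d = 0 := by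
  rw [selbergWeight, sum_eq_zero, mul_zero]
  refine fun l hl ↦ if_neg fun hdl ↦ ?_
  have := Nat.le_of_dvd (pos_of_mem_selbergSupport hl) hdl
  have := (mem_filter.1 hl).2
  lia

theorem abs_selbergWeight_le (hR : 1 ≤ R) (hd : d ∣ s.prodPrimes) :
    |selbergWeight s R d| ≤ (s.nu d)⁻¹ := by
  have hS := selbergSum_pos (s := s) hR
  have hnu := nu_pos_of_dvd_prodPrimes hd
  set G := ∑ l ∈ selbergSupport s R, if d ∣ l then s.selbergTerms l else 0
  have hG0 : 0 ≤ G := sum_nonneg fun l hl ↦ by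
    have := (selbergTerms_pos_of_mem_selbergSupport hl).le
    split_ifs <;> first | assumption | rfl
  have hGS : G ≤ selbergSum s R := sum_le_sum fun l hl ↦ by
    have := (selbergTerms_pos_of_mem_selbergSupport hl).le
    split_ifs <;> first | assumption | rfl
  have hmu : |(μ d : ℝ)| ≤ 1 := mod_cast ArithmeticFunction.abs_moebius_le_one
  rw [selbergWeight, abs_mul, abs_mul, abs_mul, abs_of_nonneg hG0, abs_of_pos (inv_pos.2 hS),
    abs_of_pos (inv_pos.2 hnu)]
  calc |(μ d : ℝ)| * (s.nu d)⁻¹ * (selbergSum s R)⁻¹ * G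
      ≤ 1 * (s.nu d)⁻¹ * (selbergSum s R)⁻¹ * selbergSum s R := by gcongr
    _ = (s.nu d)⁻¹ := by field_simp

-- Summing `ν w` over multiples inverts the Möbius transform that defines `w`.
theorem sum_nu_mul_selbergWeight (l : ℕ) :
    ∑ d ∈ s.prodPrimes.divisors, (if l ∣ d then s.nu d * selbergWeight s R d else 0) =
      if l ∈ selbergSupport s R then (selbergSum s R)⁻¹ * (μ l * s.selbergTerms l) else 0 := by
  have hexpand (d) (hd : d ∈ s.prodPrimes.divisors) :
      (if l ∣ d then s.nu d * selbergWeight s R d else 0) =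
        ∑ e ∈ selbergSupport s R, (selbergSum s R)⁻¹ * s.selbergTerms e *
          (if d ∣ e then (if l ∣ d then (μ d : ℝ) else 0) else 0) := by
    have hnu := nu_pos_of_dvd_prodPrimes (Nat.dvd_of_mem_divisors hd)
    split_ifs with h
    · rw [selbergWeight, mul_sum, mul_sum]
      refine sum_congr rfl fun e _ ↦ ?_
      split_ifs
      · field_simp
      · simp
    · simp
  have hinner (e) (he : e ∈ selbergSupport s R) :
      ∑ d ∈ s.prodPrimes.divisors, (selbergSum s R)⁻¹ * s.selbergTerms e *
          (if d ∣ e then (if l ∣ d then (μ d : ℝ) else 0) else 0) =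
        if l = e then (selbergSum s R)⁻¹ * (μ l * s.selbergTerms l) else 0 := by
    have hdvd := dvd_of_mem_selbergSupport he
    rw [← mul_sum, ← sum_filter, Nat.divisors_filter_dvd_of_dvd prodPrimes_ne_zero hdvd,
      sum_divisors_moebius_of_dvd (squarefree_of_dvd_prodPrimes hdvd)]
    split_ifs with h
    · rw [h]; ring
    · simp
  rw [sum_congr rfl hexpand, sum_comm, sum_congr rfl hinner, sum_ite_eq]

theorem mainSum_selbergWeight (hR : 1 ≤ R) :
    s.mainSum (lambdaSquared (selbergWeight s R)) = (selbergSum s R)⁻¹ := by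
  have hS := selbergSum_pos (s := s) hR
  have hterm (l : ℕ) : (s.selbergTerms l)⁻¹ *
      (if l ∈ selbergSupport s R then (selbergSum s R)⁻¹ * (μ l * s.selbergTerms l) else 0) ^ 2 =
        if l ∈ selbergSupport s R then (selbergSum s R)⁻¹ ^ 2 * s.selbergTerms l else 0 := by
    split_ifs with h
    · have hg := selbergTerms_pos_of_mem_selbergSupport h
      have hmu : (μ l : ℝ) ^ 2 = 1 := mod_cast
        ArithmeticFunction.moebius_sq_eq_one_of_squarefree
          (squarefree_of_dvd_prodPrimes (dvd_of_mem_selbergSupport h))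
      rw [mul_pow, mul_pow, hmu]
      field_simp
    · simp
  simp only [mainSum_lambdaSquared_eq_sum_mul_sum_sq, sum_nu_mul_selbergWeight, hterm]
  rw [sum_ite_mem, inter_eq_right.2 selbergSupport_subset, ← mul_sum, ← selbergSum]
  field_simp

theorem card_selbergSupport_le : #(selbergSupport s R) ≤ R := by
  have hsub : selbergSupport s R ⊆ Icc 1 R := fun l hl ↦
    mem_Icc.2 ⟨pos_of_mem_selbergSupport hl, (mem_filter.1 hl).2⟩
  simpa using card_le_card hsub

theorem errSum_selbergWeight_le (hR : 1 ≤ R) (hnu : ∀ d, d ∣ s.prodPrimes → (s.nu d)⁻¹ ≤ d)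
    (hrem : ∀ d, d ∣ s.prodPrimes → |s.rem d| ≤ d) :
    s.errSum (lambdaSquared (selbergWeight s R)) ≤ (R : ℝ) ^ 6 := by
  set F : ℕ → ℕ → ℝ := fun d₁ d₂ ↦
    |selbergWeight s R d₁| * |selbergWeight s R d₂| * |s.rem (d₁.lcm d₂)| with hF
  have hweight {d} (hd : d ∈ selbergSupport s R) : |selbergWeight s R d| ≤ R :=
    (abs_selbergWeight_le hR (dvd_of_mem_selbergSupport hd)).trans <|
      (hnu d (dvd_of_mem_selbergSupport hd)).trans (mod_cast (mem_filter.1 hd).2)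
  have hzero {d} (hd : d ∈ s.prodPrimes.divisors) (hd' : d ∉ selbergSupport s R) :
      selbergWeight s R d = 0 :=
    selbergWeight_eq_zero_of_lt (not_le.1 fun h ↦ hd' (mem_filter.2 ⟨hd, h⟩))
  have hbound {d₁ d₂} (h₁ : d₁ ∈ selbergSupport s R) (h₂ : d₂ ∈ selbergSupport s R) :
      F d₁ d₂ ≤ (R : ℝ) ^ 4 := by
    have hlcm : d₁.lcm d₂ ≤ R * R :=
      (Nat.le_of_dvd (Nat.mul_pos (pos_of_mem_selbergSupport h₁) (pos_of_mem_selbergSupport h₂))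
        (Nat.lcm_dvd_mul d₁ d₂)).trans (Nat.mul_le_mul (mem_filter.1 h₁).2 (mem_filter.1 h₂).2)
    calc F d₁ d₂ ≤ R * R * (R * R : ℕ) := by
          refine mul_le_mul (mul_le_mul (hweight h₁) (hweight h₂) (abs_nonneg _) (by positivity))
            ?_ (abs_nonneg _) (by positivity)
          exact (hrem _ (Nat.lcm_dvd (dvd_of_mem_selbergSupport h₁)
            (dvd_of_mem_selbergSupport h₂))).trans (mod_cast hlcm)
      _ = (R : ℝ) ^ 4 := by push_cast; ring
  calc s.errSum (lambdaSquared (selbergWeight s R))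
      ≤ ∑ d₁ ∈ s.prodPrimes.divisors, ∑ d₂ ∈ s.prodPrimes.divisors, F d₁ d₂ :=
        errSum_lambdaSquared_le s _
    _ = ∑ d₁ ∈ selbergSupport s R, ∑ d₂ ∈ selbergSupport s R, F d₁ d₂ := by
        rw [← sum_subset selbergSupport_subset fun _ hd hd' ↦ by simp [hF, hzero hd hd']]
        refine sum_congr rfl fun d₁ _ ↦ ?_
        exact (sum_subset selbergSupport_subset fun _ hd hd' ↦ by simp [hF, hzero hd hd']).symm
    _ ≤ ∑ _ ∈ selbergSupport s R, ∑ _ ∈ selbergSupport s R, (R : ℝ) ^ 4 :=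
        sum_le_sum fun _ h₁ ↦ sum_le_sum fun _ h₂ ↦ hbound h₁ h₂
    _ = #(selbergSupport s R) * (#(selbergSupport s R) * (R : ℝ) ^ 4) := by
        simp only [sum_const, nsmul_eq_mul]
    _ ≤ R * (R * (R : ℝ) ^ 4) := by gcongr <;> exact card_selbergSupport_le
    _ = (R : ℝ) ^ 6 := by ring

theorem siftedSum_le_totalMass_div_selbergSum_add (hR : 1 ≤ R)
    (hnu : ∀ d, d ∣ s.prodPrimes → (s.nu d)⁻¹ ≤ d)
    (hrem : ∀ d, d ∣ s.prodPrimes → |s.rem d| ≤ d) :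
    s.siftedSum ≤ s.totalMass / selbergSum s R + (R : ℝ) ^ 6 := by
  rw [div_eq_mul_inv, ← mainSum_selbergWeight hR]
  refine (siftedSum_le_mainSum_errSum_of_upperMoebius _
    (upperMoebius_lambdaSquared (selbergWeight s R) (selbergWeight_one hR))).trans ?_
  gcongr
  exact errSum_selbergWeight_le hR hnu hrem

end SelbergSieve

section OmegaWeight

open Finset
open scoped ArithmeticFunction.Omega

/-- The completely multiplicative function `m ↦ k ^ Ω(m) / m` on the `m` coprime to `B`, and `0`
elsewhere: the density attached to sieving `k` residue classes modulo each prime `p ∤ B`. -/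
noncomputable def omegaWeight (k B : ℕ) : ℕ →* ℝ where
  toFun m := if m.Coprime B then (k : ℝ) ^ Ω m / m else 0
  map_one' := by simp
  map_mul' a b := by
    rcases eq_or_ne a 0 with rfl | ha
    · simp
    rcases eq_or_ne b 0 with rfl | hb
    · simp
    simp only [Nat.coprime_mul_iff_left, ite_and, ite_mul, mul_ite, zero_mul, mul_zero,
      ArithmeticFunction.cardFactors_mul ha hb, pow_add, Nat.cast_mul, div_mul_div_comm]
    split_ifs <;> rfl

variable {k B : ℕ}

theorem omegaWeight_of_coprime {m : ℕ} (hm : m.Coprime B) :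
    omegaWeight k B m = (k : ℝ) ^ Ω m / m :=
  if_pos hm

theorem omegaWeight_of_not_coprime {m : ℕ} (hm : ¬m.Coprime B) : omegaWeight k B m = 0 :=
  if_neg hm

theorem omegaWeight_nonneg (k B m : ℕ) : 0 ≤ omegaWeight k B m := by
  by_cases hm : m.Coprime B
  · rw [omegaWeight_of_coprime hm]
    positivity
  · rw [omegaWeight_of_not_coprime hm]

theorem omegaWeight_prime_lt_one (hB : ∀ p : ℕ, p.Prime → ¬p ∣ B → k < p) {p : ℕ}
    (hp : p.Prime) : omegaWeight k B p < 1 := by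
  by_cases hpB : p.Coprime B
  · have hkp : (k : ℝ) < p := mod_cast hB p hp (hp.coprime_iff_not_dvd.1 hpB)
    rw [omegaWeight_of_coprime hpB, ArithmeticFunction.cardFactors_apply_prime hp, pow_one,
      div_lt_one (mod_cast hp.pos)]
    exact hkp
  · rw [omegaWeight_of_not_coprime hpB]
    exact one_pos

theorem sum_divisors_pow_cardFactors_le (k : ℕ) {m : ℕ} (hm : m ≠ 0) :
    ∑ d ∈ m.divisors, (k : ℝ) ^ Ω d ≤ (k + 1) ^ Ω m := by
  induction m using induction_on_primes with
  | zero => exact absurd rfl hm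
  | one => simp
  | prime_mul p a hp ih =>
    have ha : a ≠ 0 := right_ne_zero_of_mul hm
    calc ∑ d ∈ (p * a).divisors, (k : ℝ) ^ Ω d
        ≤ ∑ x ∈ p.divisors ×ˢ a.divisors, (k : ℝ) ^ Ω (x.1 * x.2) := by
          rw [Nat.divisors_mul]
          exact sum_image_le_of_nonneg (f := fun d ↦ (k : ℝ) ^ Ω d) fun _ _ ↦ by positivity
      _ = ∑ d ∈ p.divisors, ∑ e ∈ a.divisors, (k : ℝ) ^ Ω d * (k : ℝ) ^ Ω e := by
          rw [sum_product]
          refine sum_congr rfl fun d hd ↦ sum_congr rfl fun e he ↦ ?_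
          rw [ArithmeticFunction.cardFactors_mul (Nat.pos_of_mem_divisors hd).ne'
            (Nat.pos_of_mem_divisors he).ne', pow_add]
      _ = (k + 1) * ∑ e ∈ a.divisors, (k : ℝ) ^ Ω e := by
          rw [← sum_mul_sum, hp.sum_divisors, ArithmeticFunction.cardFactors_apply_prime hp]
          simp
      _ ≤ (k + 1) * (k + 1) ^ Ω a := by gcongr; exact ih ha
      _ = (k + 1) ^ Ω (p * a) := by
          rw [ArithmeticFunction.cardFactors_mul hp.ne_zero ha,
            ArithmeticFunction.cardFactors_apply_prime hp, pow_add, pow_one]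

theorem sum_divisorsAntidiagonal_omegaWeight_le (k B m : ℕ) :
    ∑ x ∈ m.divisorsAntidiagonal, omegaWeight k B x.1 * omegaWeight 1 B x.2 ≤
      omegaWeight (k + 1) B m := by
  by_cases hm : m.Coprime B
  · rcases eq_or_ne m 0 with rfl | hm0
    · simpa using omegaWeight_nonneg (k + 1) B 0
    calc ∑ x ∈ m.divisorsAntidiagonal, omegaWeight k B x.1 * omegaWeight 1 B x.2
        = ∑ x ∈ m.divisorsAntidiagonal, (k : ℝ) ^ Ω x.1 / m := sum_congr rfl fun x hx ↦ by
          obtain ⟨rfl, -⟩ := Nat.mem_divisorsAntidiagonal.1 hx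
          obtain ⟨h₁, h₂⟩ := Nat.coprime_mul_iff_left.1 hm
          rw [omegaWeight_of_coprime h₁, omegaWeight_of_coprime h₂, Nat.cast_one, one_pow,
            div_mul_div_comm, mul_one, Nat.cast_mul]
      _ = (∑ d ∈ m.divisors, (k : ℝ) ^ Ω d) / m := by
          rw [Nat.sum_divisorsAntidiagonal fun d _ ↦ (k : ℝ) ^ Ω d / m, sum_div]
      _ ≤ omegaWeight (k + 1) B m := by
          rw [omegaWeight_of_coprime hm]
          push_cast
          gcongr
          exact sum_divisors_pow_cardFactors_le k hm0
  · rw [omegaWeight_of_not_coprime hm]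
    refine (sum_eq_zero fun x hx ↦ ?_).le
    obtain ⟨rfl, -⟩ := Nat.mem_divisorsAntidiagonal.1 hx
    rw [Nat.coprime_mul_iff_left, not_and_or] at hm
    rcases hm with hm | hm <;> simp [omegaWeight_of_not_coprime hm]

theorem sum_omegaWeight_mul_sum_le (k B y z : ℕ) :
    (∑ a ∈ Icc 1 y, omegaWeight k B a) * ∑ b ∈ Icc 1 z, omegaWeight 1 B b ≤
      ∑ m ∈ Icc 1 (y * z), omegaWeight (k + 1) B m := by
  have hmaps (x) (hx : x ∈ Icc 1 y ×ˢ Icc 1 z) : x.1 * x.2 ∈ Icc 1 (y * z) := by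
    simp only [mem_product, mem_Icc] at hx ⊢
    exact ⟨Nat.mul_pos hx.1.1 hx.2.1, Nat.mul_le_mul hx.1.2 hx.2.2⟩
  rw [sum_mul_sum, ← sum_product', ← sum_fiberwise_of_maps_to hmaps]
  refine sum_le_sum fun m hm ↦ le_trans ?_ (sum_divisorsAntidiagonal_omegaWeight_le k B m)
  refine sum_le_sum_of_subset_of_nonneg (fun x hx ↦ ?_) fun _ _ _ ↦
    mul_nonneg (omegaWeight_nonneg _ _ _) (omegaWeight_nonneg _ _ _)
  rw [Nat.mem_divisorsAntidiagonal]
  exact ⟨(mem_filter.1 hx).2, by have := (mem_Icc.1 hm).1; lia⟩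

theorem sum_omegaWeight_one_pow_le (k B y : ℕ) :
    (∑ m ∈ Icc 1 y, omegaWeight 1 B m) ^ k ≤ ∑ m ∈ Icc 1 (y ^ k), omegaWeight k B m := by
  induction k with
  | zero => simp
  | succ k ih =>
    rw [pow_succ, pow_succ]
    refine le_trans ?_ (sum_omegaWeight_mul_sum_le k B (y ^ k) y)
    exact mul_le_mul_of_nonneg_right ih (sum_nonneg fun _ _ ↦ omegaWeight_nonneg _ _ _)

theorem log_add_one_div_le_sum_omegaWeight_one (hB : B ≠ 0) (K : ℕ) :
    Real.log (K + 1) / B ≤ ∑ m ∈ Icc 1 (B * K), omegaWeight 1 B m := by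
  have hharm : Real.log (K + 1) ≤ ∑ j ∈ range K, (1 : ℝ) / (j + 1) := by
    simpa [harmonic] using log_add_one_le_harmonic K
  have hB1 : (1 : ℝ) ≤ B := mod_cast Nat.one_le_iff_ne_zero.2 hB
  calc Real.log (K + 1) / B ≤ ∑ j ∈ range K, 1 / ((j : ℝ) + 1) / B := by
        rw [← sum_div]
        gcongr
    _ ≤ ∑ j ∈ range K, omegaWeight 1 B (1 + B * j) := sum_le_sum fun j _ ↦ by
        rw [omegaWeight_of_coprime (by simp), div_div]
        push_cast
        rw [one_pow]
        refine one_div_le_one_div_of_le (by positivity) ?_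
        linarith
    _ = ∑ m ∈ (range K).image (1 + B * ·), omegaWeight 1 B m := by
        rw [sum_image fun i _ j _ hij ↦ ?_]
        exact Nat.eq_of_mul_eq_mul_left (Nat.pos_of_ne_zero hB) (Nat.add_left_cancel hij)
    _ ≤ ∑ m ∈ Icc 1 (B * K), omegaWeight 1 B m := by
        refine sum_le_sum_of_subset_of_nonneg (fun m hm ↦ ?_) fun _ _ _ ↦ omegaWeight_nonneg _ _ _
        obtain ⟨j, hj, rfl⟩ := mem_image.1 hm
        have : B * (j + 1) ≤ B * K := Nat.mul_le_mul_left B (mem_range.1 hj)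
        rw [mem_Icc]
        lia

theorem log_add_one_div_pow_le_sum_omegaWeight (k : ℕ) (hB : B ≠ 0) (K : ℕ) :
    (Real.log (K + 1) / B) ^ k ≤ ∑ m ∈ Icc 1 ((B * K) ^ k), omegaWeight k B m := by
  have hlog : 0 ≤ Real.log ((K : ℝ) + 1) := Real.log_nonneg (by linarith [K.cast_nonneg (α := ℝ)])
  refine le_trans ?_ (sum_omegaWeight_one_pow_le k B (B * K))
  gcongr
  exact log_add_one_div_le_sum_omegaWeight_one hB K

theorem sum_omegaWeight_of_primeFactors_eq_le (hB : ∀ p : ℕ, p.Prime → ¬p ∣ B → k < p)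
    {l : ℕ} (hl : Squarefree l) {A : Finset ℕ}
    (hA : ∀ m ∈ A, m ≠ 0 ∧ m.primeFactors = l.primeFactors) :
    ∑ m ∈ A, omegaWeight k B m ≤
      omegaWeight k B l * ∏ p ∈ l.primeFactors, (1 - omegaWeight k B p)⁻¹ := by
  have hdvd (m) (hm : m ∈ A) : l ∣ m := by
    rw [← Nat.prod_primeFactors_of_squarefree hl, ← (hA m hm).2]
    exact Nat.prod_primeFactors_dvd m
  have hquot : ∀ c ∈ A.image (· / l), c ∈ Nat.factoredNumbers l.primeFactors := fun c hc ↦ by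
    obtain ⟨m, hm, rfl⟩ := mem_image.1 hc
    obtain ⟨hm0, hml⟩ := hA m hm
    refine Nat.mem_factoredNumbers_of_primeFactors_subset
      (Nat.div_ne_zero_iff_of_dvd (hdvd m hm) |>.2 ⟨hm0, hl.ne_zero⟩) ?_
    rw [← hml]
    exact Nat.primeFactors_mono (Nat.div_dvd_of_dvd (hdvd m hm)) hm0
  obtain ⟨-, hsum⟩ :=
    EulerProduct.summable_and_hasSum_factoredNumbers_prod_filter_prime_geometric
      (f := omegaWeight k B) (fun {p} hp ↦ by
        rw [Real.norm_of_nonneg (omegaWeight_nonneg k B p)]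
        exact omegaWeight_prime_lt_one hB hp) l.primeFactors
  have hEuler := sum_le_hasSum ((A.image (· / l)).subtype (· ∈ Nat.factoredNumbers l.primeFactors))
    (fun c _ ↦ omegaWeight_nonneg k B c) hsum
  rw [sum_subtype_of_mem (fun m ↦ omegaWeight k B m) hquot,
    filter_true_of_mem fun p ↦ Nat.prime_of_mem_primeFactors] at hEuler
  calc ∑ m ∈ A, omegaWeight k B m
      = omegaWeight k B l * ∑ c ∈ A.image (· / l), omegaWeight k B c := by
        rw [sum_image fun a ha b hb hab ↦
          (Nat.div_left_inj (hdvd a ha) (hdvd b hb)).1 hab, mul_sum]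
        refine sum_congr rfl fun m hm ↦ ?_
        rw [← map_mul, Nat.mul_div_cancel' (hdvd m hm)]
    _ ≤ _ := mul_le_mul_of_nonneg_left hEuler (omegaWeight_nonneg k B l)

/-- The primes up to `R` not dividing `B`: the sifting primes of the sieve. -/
def siftingPrimes (B R : ℕ) : Finset ℕ :=
  {p ∈ Icc 1 R | p.Prime ∧ ¬p ∣ B}

theorem mem_siftingPrimes {R p : ℕ} : p ∈ siftingPrimes B R ↔ p ≤ R ∧ p.Prime ∧ ¬p ∣ B := by
  rw [siftingPrimes, mem_filter, mem_Icc]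
  exact ⟨fun h ↦ ⟨h.1.2, h.2⟩, fun h ↦ ⟨⟨h.2.1.pos, h.1⟩, h.2⟩⟩

theorem sum_omegaWeight_le_selbergSum (hB : ∀ p : ℕ, p.Prime → ¬p ∣ B → k < p) {R : ℕ}
    {s : BoundingSieve} (hs : s.prodPrimes = ∏ p ∈ siftingPrimes B R, p)
    (hnu : ∀ m, s.nu m = omegaWeight k B m) :
    ∑ m ∈ Icc 1 R, omegaWeight k B m ≤ selbergSum s R := by
  have hcoprime : ∑ m ∈ Icc 1 R, omegaWeight k B m =
      ∑ m ∈ Icc 1 R with m.Coprime B, omegaWeight k B m :=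
    (sum_filter_of_ne fun m _ hm ↦ not_imp_comm.1 omegaWeight_of_not_coprime hm).symm
  have hmaps (m) (hm : m ∈ {m ∈ Icc 1 R | m.Coprime B}) :
      ∏ p ∈ m.primeFactors, p ∈ selbergSupport s R := by
    simp only [mem_filter, mem_Icc] at hm
    obtain ⟨⟨hm0, hmR⟩, hmB⟩ := hm
    refine mem_selbergSupport ?_ ((Nat.le_of_dvd hm0 (Nat.prod_primeFactors_dvd m)).trans hmR)
    rw [hs]
    refine prod_dvd_prod_of_subset _ _ _ fun p hp ↦ ?_
    have hpp := Nat.prime_of_mem_primeFactors hp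
    have hpm := Nat.dvd_of_mem_primeFactors hp
    exact mem_siftingPrimes.2 ⟨(Nat.le_of_dvd hm0 hpm).trans hmR, hpp,
      hpp.coprime_iff_not_dvd.1 (hmB.coprime_dvd_left hpm)⟩
  rw [hcoprime, ← sum_fiberwise_of_maps_to hmaps, selbergSum]
  refine sum_le_sum fun l hl ↦ ?_
  rw [BoundingSieve.selbergTerms_apply]
  simp only [hnu]
  refine sum_omegaWeight_of_primeFactors_eq_le hB
    (BoundingSieve.squarefree_of_dvd_prodPrimes (dvd_of_mem_selbergSupport hl)) fun m hm ↦ ?_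
  simp only [mem_filter, mem_Icc] at hm
  refine ⟨by lia, ?_⟩
  rw [← hm.2, Nat.primeFactors_prod fun p ↦ Nat.prime_of_mem_primeFactors]

end OmegaWeight

section PolynomialSieve

open Finset Polynomial
open scoped ArithmeticFunction.Omega

/-- The number of zeros modulo `d` of a polynomial with natural coefficients. -/
noncomputable def rootCount (f : ℕ[X]) (d : ℕ) : ℕ :=
  Nat.card {x : ZMod d // aeval x f = 0}

variable {f : ℕ[X]} {k B R N : ℕ}

theorem aeval_natCast_eq_zero_iff {d r : ℕ} : aeval (r : ZMod d) f = 0 ↔ d ∣ f.eval r := by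
  rw [← eq_natCast (algebraMap ℕ (ZMod d)) r, aeval_algebraMap_apply_eq_algebraMap_eval,
    eq_natCast, ZMod.natCast_eq_zero_iff]

theorem rootCount_mul {a b : ℕ} (h : a.Coprime b) :
    rootCount f (a * b) = rootCount f a * rootCount f b := by
  rw [rootCount, rootCount, rootCount, ← Nat.card_prod]
  refine Nat.card_congr <|
    ((ZMod.chineseRemainder h).toEquiv.subtypeEquiv fun x ↦ ?_).trans Equiv.subtypeProdEquivProd
  have hmap : ZMod.chineseRemainder h (aeval x f) = aeval (ZMod.chineseRemainder h x) f :=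
    (aeval_algHom_apply (ZMod.chineseRemainder h).toRingHom.toNatAlgHom x f).symm
  rw [← (ZMod.chineseRemainder h).map_eq_zero_iff, hmap, aeval_prod_apply, Prod.mk_eq_zero]
  rfl

theorem rootCount_one : rootCount f 1 = 1 :=
  Nat.card_eq_one_iff_unique.2 ⟨⟨fun _ _ ↦ Subsingleton.elim _ _⟩, ⟨0, Subsingleton.elim _ _⟩⟩

theorem rootCount_le {d : ℕ} (hd : d ≠ 0) : rootCount f d ≤ d := by
  have : NeZero d := ⟨hd⟩
  exact (Finite.card_subtype_le _).trans_eq (Nat.card_zmod d)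

theorem rootCount_eq_pow_cardFactors
    (hf : ∀ p : ℕ, p.Prime → ¬p ∣ B → rootCount f p = k) {d : ℕ} (hd : Squarefree d)
    (hdB : d.Coprime B) : rootCount f d = k ^ Ω d := by
  induction d using induction_on_primes with
  | zero => exact absurd hd not_squarefree_zero
  | one => simpa using rootCount_one
  | prime_mul p a hp ih =>
    obtain ⟨hpB, haB⟩ := Nat.coprime_mul_iff_left.1 hdB
    rw [rootCount_mul (Nat.coprime_of_squarefree_mul hd), ih hd.of_mul_right haB,
      hf p hp (hp.coprime_iff_not_dvd.1 hpB),
      ArithmeticFunction.cardFactors_mul hp.ne_zero hd.of_mul_right.ne_zero,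
      ArithmeticFunction.cardFactors_apply_prime hp, pow_add, pow_one]

theorem abs_card_natCast_eq_sub_div_le (N : ℕ) {d : ℕ} [NeZero d] (x : ZMod d) :
    |(#{r ∈ range N | ((r : ℕ) : ZMod d) = x} : ℝ) - N / d| ≤ 1 := by
  have hd : 0 < d := NeZero.pos d
  have hclass : (range N).filter (fun r : ℕ ↦ (r : ZMod d) = x) =
      (range N).filter fun r ↦ r ≡ x.val [MOD d] := by
    simp only [← ZMod.natCast_eq_natCast_iff, ZMod.natCast_zmod_val]
  have hfloor : ((N / d : ℕ) : ℝ) ≤ N / d := Nat.cast_div_le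
  have hlt : (N : ℝ) / d < (N / d : ℕ) + 1 := by
    rw [div_lt_iff₀ (mod_cast hd)]
    exact_mod_cast Nat.lt_mul_of_div_lt (Nat.lt_succ_self _) hd
  rw [hclass, ← Nat.count_eq_card_filter_range, Nat.count_modEq_card _ hd, abs_le]
  split_ifs <;> push_cast <;> constructor <;> linarith

theorem abs_card_dvd_eval_sub_rootCount_mul_le (f : ℕ[X]) (N : ℕ) {d : ℕ} (hd : d ≠ 0) :
    |(#{r ∈ range N | d ∣ f.eval r} : ℝ) - rootCount f d * (N / d)| ≤ rootCount f d := by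
  classical
  have : NeZero d := ⟨hd⟩
  set Z : Finset (ZMod d) := {x | aeval x f = 0} with hZ
  have hcard : rootCount f d = #Z := by
    rw [rootCount, Nat.card_eq_fintype_card, Fintype.card_subtype]
  have hfiber : #{r ∈ range N | d ∣ f.eval r} = ∑ x ∈ Z,
      #{r ∈ range N | ((r : ℕ) : ZMod d) = x} := by
    have hmaps (r : ℕ) (hr : r ∈ {r ∈ range N | d ∣ f.eval r}) : (r : ZMod d) ∈ Z := by
      simpa [hZ, aeval_natCast_eq_zero_iff] using (mem_filter.1 hr).2
    rw [card_eq_sum_card_fiberwise hmaps]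
    refine sum_congr rfl fun x hx ↦ ?_
    rw [filter_filter]
    refine congrArg card (filter_congr fun r _ ↦ and_iff_right_of_imp ?_)
    rintro rfl
    exact aeval_natCast_eq_zero_iff.1 (mem_filter.1 hx).2
  calc |(#{r ∈ range N | d ∣ f.eval r} : ℝ) - rootCount f d * (N / d)|
      = |∑ x ∈ Z, ((#{r ∈ range N | ((r : ℕ) : ZMod d) = x} : ℝ) - N / d)| := by
        rw [hfiber, hcard, sum_sub_distrib, sum_const, nsmul_eq_mul, Nat.cast_sum]
    _ ≤ ∑ x ∈ Z, |(#{r ∈ range N | ((r : ℕ) : ZMod d) = x} : ℝ) - N / d| := abs_sum_le_sum_abs _ _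
    _ ≤ ∑ x ∈ Z, 1 := sum_le_sum fun x _ ↦ abs_card_natCast_eq_sub_div_le N x
    _ = rootCount f d := by rw [hcard, sum_const, nsmul_eq_mul, mul_one]

theorem squarefree_prod_siftingPrimes (B R : ℕ) : Squarefree (∏ p ∈ siftingPrimes B R, p) :=
  squarefree_prod_of_pairwise_isCoprime
    (fun _ hp _ hq hpq ↦ Nat.coprime_iff_isRelPrime.1 <|
      (Nat.coprime_primes (mem_siftingPrimes.1 hp).2.1 (mem_siftingPrimes.1 hq).2.1).2 hpq)
    fun _ hp ↦ (mem_siftingPrimes.1 hp).2.1.prime.squarefree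

theorem coprime_of_dvd_prod_siftingPrimes {d : ℕ} (hd : d ∣ ∏ p ∈ siftingPrimes B R, p) :
    d.Coprime B :=
  Nat.Coprime.coprime_dvd_left hd <| Nat.Coprime.prod_left fun _ hp ↦
    (mem_siftingPrimes.1 hp).2.1.coprime_iff_not_dvd.2 (mem_siftingPrimes.1 hp).2.2

/-- The sieve problem of sifting the values `f 0, …, f (N - 1)`, counted with multiplicity, by the
primes `p ≤ R` with `p ∤ B`, when `f` has `k` zeros modulo each of them. -/
noncomputable def polynomialSieve (f : ℕ[X]) (B R N : ℕ) (hk : k ≠ 0)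
    (hB : ∀ p : ℕ, p.Prime → ¬p ∣ B → k < p) : BoundingSieve where
  support := (range N).image fun r ↦ f.eval r
  prodPrimes := ∏ p ∈ siftingPrimes B R, p
  prodPrimes_squarefree := squarefree_prod_siftingPrimes B R
  weights m := #{r ∈ range N | f.eval r = m}
  weights_nonneg _ := Nat.cast_nonneg _
  totalMass := N
  nu := ⟨omegaWeight k B, by rcases eq_or_ne B 1 with rfl | _ <;> simp [omegaWeight]⟩
  nu_mult := ⟨(omegaWeight k B).map_one, fun _ ↦ (omegaWeight k B).map_mul _ _⟩
  nu_pos_of_prime p hp hd := by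
    change 0 < omegaWeight k B p
    rw [omegaWeight_of_coprime (coprime_of_dvd_prod_siftingPrimes hd)]
    have := hp.pos
    positivity
  nu_lt_one_of_prime p hp _ := omegaWeight_prime_lt_one hB hp

variable (hk : k ≠ 0) (hB : ∀ p : ℕ, p.Prime → ¬p ∣ B → k < p)

theorem sum_polynomialSieve_weights (P : ℕ → Prop) [DecidablePred P] :
    (∑ m ∈ (polynomialSieve f B R N hk hB).support,
      if P m then (polynomialSieve f B R N hk hB).weights m else 0) =
      #{r ∈ range N | P (f.eval r)} := by
  have h := sum_comp (s := range N) (fun m ↦ if P m then (1 : ℝ) else 0) fun r ↦ f.eval r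
  rw [sum_boole] at h
  simp only [h, nsmul_eq_mul, mul_ite, mul_one, mul_zero]
  rfl

theorem abs_rem_polynomialSieve_le (hf : ∀ p : ℕ, p.Prime → ¬p ∣ B → rootCount f p = k) {d : ℕ}
    (hd : d ∣ (polynomialSieve f B R N hk hB).prodPrimes) :
    |(polynomialSieve f B R N hk hB).rem d| ≤ d := by
  have hd0 : d ≠ 0 := ne_zero_of_dvd_ne_zero BoundingSieve.prodPrimes_ne_zero hd
  have hdB : d.Coprime B := coprime_of_dvd_prod_siftingPrimes hd
  have hnu : (polynomialSieve f B R N hk hB).nu d = (k : ℝ) ^ Ω d / d := omegaWeight_of_coprime hdB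
  have hmain : (k : ℝ) ^ Ω d / d * N = rootCount f d * (N / d) := by
    rw [rootCount_eq_pow_cardFactors hf (BoundingSieve.squarefree_of_dvd_prodPrimes hd) hdB]
    push_cast
    ring
  rw [BoundingSieve.rem, BoundingSieve.multSum, sum_polynomialSieve_weights, hnu]
  refine le_trans ?_ ((abs_card_dvd_eval_sub_rootCount_mul_le f N hd0).trans
    (mod_cast rootCount_le hd0))
  exact (congrArg (fun t ↦ |(#{r ∈ range N | d ∣ f.eval r} : ℝ) - t|) hmain).le

theorem card_le_of_forall_prime_not_dvd_eval (hk : k ≠ 0)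
    (hB : ∀ p : ℕ, p.Prime → ¬p ∣ B → k < p)
    (hf : ∀ p : ℕ, p.Prime → ¬p ∣ B → rootCount f p = k) (hB0 : B ≠ 0) {K : ℕ} (hK : K ≠ 0)
    {A : Finset ℕ} (hA : A ⊆ range N)
    (hsift : ∀ r ∈ A, ∀ p ≤ (B * K) ^ k, p.Prime → ¬p ∣ B → ¬p ∣ f.eval r) :
    (#A : ℝ) ≤ N * (B / Real.log (K + 1)) ^ k + (((B * K) ^ k : ℕ) : ℝ) ^ 6 := by
  set R := (B * K) ^ k
  set s := polynomialSieve f B R N hk hB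
  have hsub : A ⊆ {r ∈ range N | s.prodPrimes.Coprime (f.eval r)} := fun r hr ↦
    mem_filter.2 ⟨hA hr, show (∏ p ∈ siftingPrimes B R, p).Coprime _ from
      Nat.Coprime.prod_left fun p hp ↦ by
      obtain ⟨hpR, hp, hpB⟩ := mem_siftingPrimes.1 hp
      exact hp.coprime_iff_not_dvd.2 (hsift r hr p hpR hp hpB)⟩
  have hnu (d : ℕ) (hd : d ∣ s.prodPrimes) : (s.nu d)⁻¹ ≤ d := by
    change (omegaWeight k B d)⁻¹ ≤ d
    rw [omegaWeight_of_coprime (coprime_of_dvd_prod_siftingPrimes hd), inv_div]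
    exact div_le_self d.cast_nonneg (one_le_pow₀ (mod_cast Nat.one_le_iff_ne_zero.2 hk))
  have hlog : 0 < Real.log ((K : ℝ) + 1) :=
    Real.log_pos (by linarith [(mod_cast Nat.pos_of_ne_zero hK : (0 : ℝ) < K)])
  have : (0 : ℝ) < B := mod_cast Nat.pos_of_ne_zero hB0
  have hsum : (Real.log (K + 1) / B) ^ k ≤ selbergSum s R :=
    (log_add_one_div_pow_le_sum_omegaWeight k hB0 K).trans
      (sum_omegaWeight_le_selbergSum hB rfl fun _ ↦ rfl)
  calc (#A : ℝ) ≤ #{r ∈ range N | s.prodPrimes.Coprime (f.eval r)} := mod_cast card_le_card hsub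
    _ = s.siftedSum := (sum_polynomialSieve_weights hk hB _).symm
    _ ≤ N / selbergSum s R + (R : ℝ) ^ 6 :=
        siftedSum_le_totalMass_div_selbergSum_add (Nat.one_le_pow _ _ (by positivity)) hnu
          fun _ hd ↦ abs_rem_polynomialSieve_le hk hB hf hd
    _ ≤ N / (Real.log (K + 1) / B) ^ k + (R : ℝ) ^ 6 := by gcongr
    _ = N * (B / Real.log (K + 1)) ^ k + (R : ℝ) ^ 6 := by
        rw [div_eq_mul_inv, ← inv_pow, inv_div]

theorem rootCount_triple {c p : ℕ} (hp : p.Prime) (hpB : ¬p ∣ 6 * c * (c - 1)) :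
    rootCount ((X + 1) * (C c * X + 1) * (C (2 * c) * X + C (c + 1))) p = 3 := by
  have : Fact p.Prime := ⟨hp⟩
  have hB0 : ((6 * c * (c - 1) : ℕ) : ZMod p) ≠ 0 := mt (ZMod.natCast_eq_zero_iff _ _).1 hpB
  have hc1 : 1 ≤ c := Nat.one_le_iff_ne_zero.2 (by rintro rfl; simp at hpB)
  obtain ⟨h2, hc, hc'⟩ : (2 : ZMod p) ≠ 0 ∧ (c : ZMod p) ≠ 0 ∧ (c : ZMod p) - 1 ≠ 0 := by
    push_cast [hc1] at hB0
    refine ⟨fun h ↦ hB0 ?_, fun h ↦ hB0 ?_, fun h ↦ hB0 ?_⟩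
    · linear_combination 3 * c * ((c : ZMod p) - 1) * h
    · linear_combination 6 * ((c : ZMod p) - 1) * h
    · linear_combination 6 * (c : ZMod p) * h
  have hroots (x : ZMod p) :
      aeval x ((X + 1) * (C c * X + 1) * (C (2 * c) * X + C (c + 1)) : ℕ[X]) = 0 ↔
      x ∈ ({-1, -1 / (c : ZMod p), -((c : ZMod p) + 1) / (2 * c)} : Finset (ZMod p)) := by
    simp only [map_mul, map_add, map_one, eq_natCast, map_natCast, map_ofNat, aeval_X, mul_eq_zero,
      mem_insert, mem_singleton, or_assoc, eq_div_iff hc, eq_div_iff (mul_ne_zero h2 hc)]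
    refine or_congr add_eq_zero_iff_eq_neg (or_congr ?_ ?_) <;>
      constructor <;> intro h <;> linear_combination h
  rw [rootCount, Nat.card_congr (Equiv.subtypeEquivRight hroots), Nat.card_eq_fintype_card,
    Fintype.card_coe]
  refine card_eq_three.2 ⟨_, _, _, fun h ↦ hc' ?_, fun h ↦ hc' ?_, fun h ↦ hc' ?_, rfl⟩
  · rw [eq_div_iff hc] at h
    linear_combination -h
  · rw [eq_div_iff (mul_ne_zero h2 hc)] at h
    linear_combination -h
  · rw [div_eq_div_iff hc (mul_ne_zero h2 hc)] at h
    refine (mul_eq_zero.1 ?_).resolve_left hc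
    linear_combination h

theorem card_prime_triple_le {c : ℕ} (hc : 2 ≤ c) {K : ℕ} (hK : K ≠ 0) {A : Finset ℕ}
    (hA : A ⊆ range N)
    (hprime : ∀ r ∈ A, (r + 1).Prime ∧ (c * r + 1).Prime ∧ (2 * c * r + c + 1).Prime) :
    (#A : ℝ) ≤ N * ((6 * c * (c - 1) : ℕ) / Real.log (K + 1)) ^ 3 +
      (((6 * c * (c - 1) * K) ^ 3 : ℕ) : ℝ) ^ 6 + ((6 * c * (c - 1) * K) ^ 3 : ℕ) := by
  set B := 6 * c * (c - 1)
  set R := (B * K) ^ 3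
  have hB0 : B ≠ 0 := mul_ne_zero (by lia) (by lia)
  have hB (p : ℕ) (hp : p.Prime) (hpB : ¬p ∣ B) : 3 < p := by
    by_contra! hp3
    have hp2 := hp.two_le
    exact hpB (Dvd.dvd.mul_right (Dvd.dvd.mul_right (by interval_cases p <;> norm_num) c) (c - 1))
  have hlarge := card_le_of_forall_prime_not_dvd_eval three_ne_zero hB
    (fun p hp hpB ↦ rootCount_triple hp hpB) hB0 hK ((filter_subset (R ≤ ·) A).trans hA)
    fun r hr p hpR hp _ hdvd ↦ by
      obtain ⟨hrA, hRr⟩ := mem_filter.1 hr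
      obtain ⟨h₁, h₂, h₃⟩ := hprime r hrA
      have hcr : r ≤ c * r := Nat.le_mul_of_pos_left r (by lia)
      simp only [eval_mul, eval_add, eval_X, eval_one, eval_C, ← add_assoc, hp.dvd_mul,
        Nat.prime_dvd_prime_iff_eq hp h₁, Nat.prime_dvd_prime_iff_eq hp h₂,
        Nat.prime_dvd_prime_iff_eq hp h₃] at hdvd
      rw [mul_assoc 2 c r] at hdvd
      lia
  have hsmall : #{r ∈ A | ¬R ≤ r} ≤ R := by
    refine (card_le_card fun r hr ↦ ?_).trans_eq (card_range R)
    exact mem_range.2 (not_le.1 (mem_filter.1 hr).2)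
  have hsplit : (#A : ℝ) = #{r ∈ A | R ≤ r} + #{r ∈ A | ¬R ≤ r} :=
    mod_cast (card_filter_add_card_filter_not (s := A) (R ≤ ·)).symm
  rw [hsplit]
  exact add_le_add hlarge (mod_cast hsmall)

end PolynomialSieve

section EqualTotients

open Finset

variable {A : Finset ℕ} {X J K ℓ : ℕ} {T : ℝ}

theorem totient_eq_cases {N h Q : ℕ} (hN : N ≠ 0) (hh : h ≠ 0) (hgcd : N.gcd (N + h) ∣ 2)
    (htot : N.totient = (N + h).totient) (Y : ℝ) :
    (∀ r ∈ N.primeFactors, ∀ q ∈ (r - 1).primeFactors, q ≤ Q) ∨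
    (∃ r > Q, r ^ 2 ∣ N ∨ r ^ 2 ∣ N + h) ∨
    (∃ q a b m m', Q < q ∧ LinkedFactorization h q a b m m' N ∧
      ((q * a + 1) * (q * b + 1) : ℕ) ≤ Y) ∨
    (∃ q a b m m', Q < q ∧ LinkedFactorization h q a b m m' N ∧
      Y < ((q * a + 1) * (q * b + 1) : ℕ) ∧ m' ≠ m + h) ∨
    ∃ q a b, LinkedFactorization h q a b 2 (2 + h) N := by
  by_cases hsq : ∃ r > Q, r ^ 2 ∣ N ∨ r ^ 2 ∣ N + h
  · exact Or.inr (Or.inl hsq)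
  rcases smooth_or_sq_dvd_or_exists_linkedFactorization hN htot Q with
    hsmooth | hsq' | ⟨q, a, b, m, m', hQq, H⟩
  · exact Or.inl hsmooth
  · exact absurd hsq' hsq
  refine Or.inr (Or.inr ?_)
  rcases le_or_gt (((q * a + 1) * (q * b + 1) : ℕ) : ℝ) Y with hle | hlt
  · exact Or.inl ⟨q, a, b, m, m', hQq, H, hle⟩
  rcases ne_or_eq m' (m + h) with hne | rfl
  · exact Or.inr (Or.inl ⟨q, a, b, m, m', hQq, H, hlt, hne⟩)
  have hlarge {c : ℕ} (hc : 0 < c) : Q < q * c + 1 :=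
    Nat.lt_succ_of_lt (hQq.trans_le (Nat.le_mul_of_pos_right q hc))
  obtain rfl : m = 2 := H.eq_two hN hh hgcd htot
    (fun hdvd ↦ hsq ⟨_, hlarge H.pos_left, Or.inl hdvd⟩)
    fun hdvd ↦ hsq ⟨_, hlarge H.pos_right, Or.inr hdvd⟩
  exact Or.inr (Or.inr ⟨q, a, b, H⟩)

theorem LinkedFactorization.exists_eq_two_mul {N q a b : ℕ}
    (H : LinkedFactorization (2 * ℓ) q a b 2 (2 + 2 * ℓ) N) :
    ∃ r, N = 2 * (ℓ + 1) * r + 2 ∧ (r + 1).Prime ∧ ((ℓ + 1) * r + 1).Prime := by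
  have ha : q * a = (ℓ + 1) * (q * b) :=
    Nat.eq_of_mul_eq_mul_left two_pos (by linear_combination q * H.mul_eq_mul)
  refine ⟨q * b, ?_, H.prime_right, ha ▸ H.prime_left⟩
  rw [H.eq_left, ha]
  ring

theorem card_le_of_linkedFactorization_two (hℓ : ℓ ≠ 0) (hK : K ≠ 0) (hA : A ⊆ Icc 1 X)
    (hprime : ∀ N ∈ A, (N + ℓ).Prime)
    (hL : ∀ N ∈ A, ∃ q a b, LinkedFactorization (2 * ℓ) q a b 2 (2 + 2 * ℓ) N) :
    (#A : ℝ) ≤ X * ((6 * (ℓ + 1) * ℓ : ℕ) / Real.log (K + 1)) ^ 3 +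
      (((6 * (ℓ + 1) * ℓ * K) ^ 3 : ℕ) : ℝ) ^ 6 + ((6 * (ℓ + 1) * ℓ * K) ^ 3 : ℕ) := by
  set S : Finset ℕ := {r ∈ range X | (r + 1).Prime ∧ ((ℓ + 1) * r + 1).Prime ∧
    (2 * (ℓ + 1) * r + (ℓ + 1) + 1).Prime}
  have hsub : A ⊆ S.image (2 * (ℓ + 1) * · + 2) := fun N hN ↦ by
    obtain ⟨q, a, b, H⟩ := hL N hN
    obtain ⟨r, rfl, hr, hcr⟩ := H.exists_eq_two_mul
    have : r ≤ 2 * (ℓ + 1) * r := Nat.le_mul_of_pos_left r (by lia)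
    have := (mem_Icc.1 (hA hN)).2
    refine mem_image_of_mem _ (mem_filter.2 ⟨mem_range.2 (by lia), hr, hcr, ?_⟩)
    convert hprime _ hN using 1
    ring
  have hS := card_prime_triple_le (c := ℓ + 1) (by lia) hK (filter_subset _ (range X))
    fun r hr ↦ (mem_filter.1 hr).2
  exact le_trans (mod_cast (card_le_card hsub).trans card_image_le) hS

theorem card_le_of_totient_eq (hℓ : ℓ ≠ 0) (hJ : 2 ≤ J) (hK : K ≠ 0) (hT : 0 < T)
    (hTJ : T ≤ 2 ^ J) (hX : 2 * ℓ ≤ X) (hA : A ⊆ Icc 1 X) (hprime : ∀ N ∈ A, (N + ℓ).Prime)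
    (htot : ∀ N ∈ A, N.totient = (N + 2 * ℓ).totient) :
    (#A : ℝ) ≤ (X : ℝ) ^ (1 - 1 / J : ℝ) * Real.exp (4 * Real.exp 40 * (J : ℝ) ^ 32) +
      6 * X / (2 ^ J : ℕ) + (1 + T) * X / (2 ^ J : ℕ) * (1 + Real.log (2 * X : ℕ)) ^ 2 +
      8 * X / T * (1 + Real.log (2 * X : ℕ)) ^ 2 * Real.log (2 * X : ℕ) +
      (X * ((6 * (ℓ + 1) * ℓ : ℕ) / Real.log (K + 1)) ^ 3 +
        (((6 * (ℓ + 1) * ℓ * K) ^ 3 : ℕ) : ℝ) ^ 6 + ((6 * (ℓ + 1) * ℓ * K) ^ 3 : ℕ)) := by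
  have hQ : 2 ^ J ≠ 0 := by positivity
  have hgcd (N) (hN : N ∈ A) : N.gcd (N + 2 * ℓ) ∣ 2 := by
    have hN0 := (mem_Icc.1 (hA hN)).1
    exact gcd_add_two_mul_dvd_two (coprime_of_prime_add (by lia) hℓ (hprime N hN))
  have hcases (N) (hN : N ∈ A) := totient_eq_cases (Q := 2 ^ J)
    (Nat.one_le_iff_ne_zero.1 (mem_Icc.1 (hA hN)).1) (mul_ne_zero two_ne_zero hℓ) (hgcd N hN)
    (htot N hN) (T * X)
  rw [add_assoc, add_assoc, add_assoc]
  refine card_le_add_of_forall_or hcases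
    (fun F hF hP ↦ card_le_of_pred_primeFactors_smooth hJ (hF.trans hA) hP) fun F₁ hF₁ hR₁ ↦ ?_
  refine card_le_add_of_forall_or hR₁
    (fun F hF hP ↦ card_le_of_sq_dvd hQ ((hF.trans hF₁).trans hA) hX hP) fun F₂ hF₂' hR₂ ↦ ?_
  have hF₂ := hF₂'.trans hF₁
  refine card_le_add_of_forall_or hR₂
    (fun F hF hP ↦ card_le_of_linkedFactorization_small hQ hT.le ((hF.trans hF₂).trans hA) hX
      (fun N hN ↦ hgcd N (hF₂ (hF hN))) hP) fun F₃ hF₃' hR₃ ↦ ?_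
  have hF₃ := hF₃'.trans hF₂
  refine card_le_add_of_forall_or hR₃ (fun F hF hP ↦ ?_) fun F hF hR ↦
    card_le_of_linkedFactorization_two hℓ hK ((hF.trans hF₃).trans hA)
      (fun N hN ↦ hprime N (hF₃ (hF hN))) hR
  refine card_le_of_linkedFactorization_large hT ((hF.trans hF₃).trans hA) hX
    (fun N hN ↦ hgcd N (hF₃ (hF hN))) fun N hN ↦ ?_
  obtain ⟨q, a, b, m, m', hQq, H, hlt, hne⟩ := hP N hN
  exact ⟨q, a, b, m, m', hTJ.trans (mod_cast hQq.le), H, hlt, hne⟩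

end EqualTotients

section Parameters

open Finset

variable {X : ℕ}

theorem rpow_one_sub_mul_exp_le {x δ c : ℝ} {k : ℕ} (hx : 0 < x) (hlog : 0 < Real.log x)
    (h : c + k * Real.log (Real.log x) ≤ δ * Real.log x) :
    x ^ (1 - δ) * Real.exp c ≤ x / Real.log x ^ k := by
  have hdiv : x / Real.log x ^ k = Real.exp (Real.log x - k * Real.log (Real.log x)) := by
    rw [Real.exp_sub, Real.exp_log hx, Real.exp_nat_mul, Real.exp_log hlog]
  rw [hdiv, Real.rpow_def_of_pos hx, ← Real.exp_add, Real.exp_le_exp]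
  linarith

theorem eventually_mul_ceil_pow_add_le (c : ℝ) (k : ℕ) :
    ∀ᶠ u : ℝ in atTop, c * (⌈16 * u⌉₊ : ℝ) ^ k + 3 * u ≤ 1 / ⌈16 * u⌉₊ * Real.exp u := by
  have hlittle : (fun u : ℝ ↦ |c| * 17 ^ (k + 1) * u ^ (k + 1) + 51 * u ^ 2) =o[atTop]
      Real.exp := by
    simpa only [one_mul] using
      ((isLittleO_pow_exp_pos_mul_atTop (k + 1) one_pos).const_mul_left (|c| * 17 ^ (k + 1))).add
        ((isLittleO_pow_exp_pos_mul_atTop 2 one_pos).const_mul_left 51)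
  filter_upwards [hlittle.bound one_pos, eventually_ge_atTop 1] with u hu hu1
  rw [one_mul, Real.norm_of_nonneg (by positivity), Real.norm_of_nonneg (Real.exp_pos u).le] at hu
  have hle : (⌈16 * u⌉₊ : ℝ) ≤ 17 * u := by
    linarith [Nat.ceil_lt_add_one (a := 16 * u) (by linarith)]
  have hpos : (0 : ℝ) < ⌈16 * u⌉₊ := mod_cast Nat.ceil_pos.2 (by linarith)
  rw [one_div, ← div_eq_inv_mul, le_div_iff₀ hpos]
  calc (c * (⌈16 * u⌉₊ : ℝ) ^ k + 3 * u) * ⌈16 * u⌉₊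
      = c * (⌈16 * u⌉₊ : ℝ) ^ (k + 1) + 3 * u * ⌈16 * u⌉₊ := by ring
    _ ≤ |c| * (17 * u) ^ (k + 1) + 3 * u * (17 * u) := by
        gcongr
        exact le_abs_self c
    _ = |c| * 17 ^ (k + 1) * u ^ (k + 1) + 51 * u ^ 2 := by ring
    _ ≤ Real.exp u := hu

theorem pow_le_two_pow_ceil {L : ℝ} (hL : 1 ≤ L) : L ^ 11 ≤ 2 ^ ⌈16 * Real.log L⌉₊ := by
  have hlog : 0 ≤ Real.log L := Real.log_nonneg hL
  rw [← Real.log_le_log_iff (by positivity) (by positivity), Real.log_pow, Real.log_pow]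
  calc ((11 : ℕ) : ℝ) * Real.log L ≤ 16 * Real.log L * Real.log 2 := by
        push_cast
        nlinarith [Real.log_two_gt_d9]
    _ ≤ ⌈16 * Real.log L⌉₊ * Real.log 2 :=
        mul_le_mul_of_nonneg_right (Nat.le_ceil _) (Real.log_nonneg one_le_two)

theorem one_add_log_two_mul_le (hX : 2 ≤ Real.log X) :
    1 + Real.log (2 * X : ℕ) ≤ 2 * Real.log X := by
  have hX0 : (X : ℝ) ≠ 0 := fun h0 ↦ by norm_num [h0] at hX
  rw [Nat.cast_mul, Real.log_mul (by norm_num) hX0]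
  push_cast
  linarith [Real.log_two_lt_d9]

theorem one_add_log_pow_mul_div_le {Q : ℝ} (hX : 2 ≤ Real.log X) (hQ : Real.log X ^ 11 ≤ Q) :
    (1 + Real.log X ^ 6) * X / Q * (1 + Real.log (2 * X : ℕ)) ^ 2 ≤ 8 * (X / Real.log X ^ 3) := by
  have : 0 < Real.log X := by linarith
  have := Real.log_natCast_nonneg (2 * X)
  calc (1 + Real.log X ^ 6) * X / Q * (1 + Real.log (2 * X : ℕ)) ^ 2
      ≤ (Real.log X ^ 6 + Real.log X ^ 6) * X / Real.log X ^ 11 * (2 * Real.log X) ^ 2 := by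
        gcongr
        · exact one_le_pow₀ (by linarith)
        · exact one_add_log_two_mul_le hX
    _ = 8 * (X / Real.log X ^ 3) := by
        field_simp
        ring

theorem div_log_pow_mul_le (hX : 2 ≤ Real.log X) :
    8 * X / Real.log X ^ 6 * (1 + Real.log (2 * X : ℕ)) ^ 2 * Real.log (2 * X : ℕ) ≤
      64 * (X / Real.log X ^ 3) := by
  have : 0 < Real.log X := by linarith
  have := Real.log_natCast_nonneg (2 * X)
  have hle := one_add_log_two_mul_le hX
  calc 8 * X / Real.log X ^ 6 * (1 + Real.log (2 * X : ℕ)) ^ 2 * Real.log (2 * X : ℕ)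
      ≤ 8 * X / Real.log X ^ 6 * (2 * Real.log X) ^ 2 * (2 * Real.log X) := by
        gcongr
        linarith
    _ = 64 * (X / Real.log X ^ 3) := by
        field_simp
        ring

theorem floor_exp_log_pow_le (hX : 0 < Real.log X)
    (hexp : Real.log X ^ 3 ≤ Real.exp (Real.log X / 2)) :
    (⌊Real.exp (Real.log X / 40)⌋₊ : ℝ) ^ 18 ≤ X / Real.log X ^ 3 := by
  have hX0 : (0 : ℝ) < X := lt_of_le_of_ne X.cast_nonneg fun h0 ↦ by simp [← h0] at hX
  rw [le_div_iff₀ (by positivity)]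
  calc (⌊Real.exp (Real.log X / 40)⌋₊ : ℝ) ^ 18 * Real.log X ^ 3
      ≤ Real.exp (Real.log X / 40) ^ 18 * Real.exp (Real.log X / 2) := by
        gcongr
        exact Nat.floor_le (Real.exp_pos _).le
    _ = Real.exp (19 / 20 * Real.log X) := by
        rw [← Real.exp_nat_mul, ← Real.exp_add]
        push_cast
        ring_nf
    _ ≤ Real.exp (Real.log X) := Real.exp_le_exp.2 (by linarith)
    _ = X := Real.exp_log hX0

theorem prime_triple_bound_le (B : ℕ) (hX : 0 < Real.log X)
    (hexp : Real.log X ^ 3 ≤ Real.exp (Real.log X / 2)) {K : ℕ}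
    (hK : K = ⌊Real.exp (Real.log X / 40)⌋₊) :
    X * (B / Real.log (K + 1)) ^ 3 + (((B * K) ^ 3 : ℕ) : ℝ) ^ 6 + ((B * K) ^ 3 : ℕ) ≤
      ((40 * B) ^ 3 + 2 * B ^ 18) * (X / Real.log X ^ 3) := by
  have hlogK : Real.log X / 40 ≤ Real.log (K + 1) := by
    rw [Real.le_log_iff_exp_le (by positivity), hK]
    exact (Nat.lt_floor_add_one _).le
  have hquot : 0 ≤ B / Real.log (K + 1) :=
    div_nonneg B.cast_nonneg (le_trans (by positivity) hlogK)
  have hmain : X * ((B : ℝ) / Real.log (K + 1)) ^ 3 ≤ (40 * B) ^ 3 * (X / Real.log X ^ 3) :=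
    calc X * ((B : ℝ) / Real.log (K + 1)) ^ 3 ≤ X * (B / (Real.log X / 40)) ^ 3 := by gcongr
      _ = (40 * B) ^ 3 * (X / Real.log X ^ 3) := by field_simp
  have herror : (((B * K) ^ 3 : ℕ) : ℝ) ^ 6 ≤ B ^ 18 * (X / Real.log X ^ 3) :=
    calc (((B * K) ^ 3 : ℕ) : ℝ) ^ 6 = (B : ℝ) ^ 18 * (K : ℝ) ^ 18 := by push_cast; ring
      _ ≤ B ^ 18 * (X / Real.log X ^ 3) := by
        gcongr
        exact hK ▸ floor_exp_log_pow_le hX hexp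
  have hself : (((B * K) ^ 3 : ℕ) : ℝ) ≤ (((B * K) ^ 3 : ℕ) : ℝ) ^ 6 :=
    mod_cast Nat.le_self_pow (by norm_num) _
  linarith

theorem exists_eventually_card_le_of_totient_eq {ℓ : ℕ} (hℓ : ℓ ≠ 0) :
    ∃ C : ℝ, 0 < C ∧ ∀ᶠ X : ℕ in atTop, ∀ A ⊆ Icc 1 X, (∀ N ∈ A, (N + ℓ).Prime) →
      (∀ N ∈ A, N.totient = (N + 2 * ℓ).totient) → (#A : ℝ) ≤ C * (X / Real.log X ^ 3) := by
  set B := 6 * (ℓ + 1) * ℓ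
  have hlog : Tendsto (fun X : ℕ ↦ Real.log X) atTop atTop :=
    Real.tendsto_log_atTop.comp tendsto_natCast_atTop_atTop
  have hexp : ∀ᶠ L : ℝ in atTop, L ^ 3 ≤ Real.exp (L / 2) := by
    filter_upwards [(isLittleO_pow_exp_pos_mul_atTop 3 one_half_pos).bound one_pos,
      eventually_ge_atTop 0] with L hL hL0
    rwa [one_mul, Real.norm_of_nonneg (by positivity), Real.norm_of_nonneg (Real.exp_pos _).le,
      one_div_mul_eq_div] at hL
  refine ⟨1 + 6 + 8 + 64 + ((40 * B) ^ 3 + 2 * B ^ 18), by positivity, ?_⟩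
  filter_upwards [eventually_ge_atTop (2 * ℓ), hlog.eventually_ge_atTop 3, hlog.eventually hexp,
    (Real.tendsto_log_atTop.comp hlog).eventually_ge_atTop 1,
    (Real.tendsto_log_atTop.comp hlog).eventually
      (eventually_mul_ceil_pow_add_le (4 * Real.exp 40) 32)] with X hX hL hLexp hu hsmooth A hA
    hprime htot
  simp only [Function.comp_apply] at hu hsmooth
  have hL0 : 0 < Real.log X := by linarith
  have hX0 : (0 : ℝ) < X := lt_of_le_of_ne X.cast_nonneg fun h0 ↦ by simp [← h0] at hL0
  rw [Real.exp_log hL0] at hsmooth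
  set J := ⌈16 * Real.log (Real.log X)⌉₊
  have hJ : 2 ≤ J := Nat.lt_ceil.2 (by push_cast; linarith)
  have hQ : Real.log X ^ 11 ≤ 2 ^ J := pow_le_two_pow_ceil (by linarith)
  have hpow {k : ℕ} (hk : k ≤ 11) : Real.log X ^ k ≤ 2 ^ J :=
    (pow_le_pow_right₀ (by linarith) hk).trans hQ
  have hK : ⌊Real.exp (Real.log X / 40)⌋₊ ≠ 0 :=
    (Nat.floor_pos.2 (Real.one_le_exp (by positivity))).ne'
  have hsq : 6 * (X : ℝ) / 2 ^ J ≤ 6 * (X / Real.log X ^ 3) := by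
    rw [mul_div_assoc]
    gcongr
    exact hpow (by norm_num)
  refine (card_le_of_totient_eq hℓ hJ hK (by positivity) (hpow (k := 6) (by norm_num)) hX hA hprime
    htot).trans ?_
  rw [Nat.cast_pow, Nat.cast_ofNat]
  linarith [rpow_one_sub_mul_exp_le (k := 3) hX0 hL0 (by push_cast; exact hsmooth), hsq,
    one_add_log_pow_mul_div_le (by linarith) hQ, div_log_pow_mul_le (X := X) (by linarith),
    prime_triple_bound_le B hL0 hLexp rfl]

theorem log_le_two_mul_log_floor {x : ℝ} (hx : 4 ≤ x) : Real.log x ≤ 2 * Real.log ⌊x⌋₊ := by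
  have hlt := Nat.lt_floor_add_one x
  calc Real.log x ≤ Real.log ((⌊x⌋₊ : ℝ) ^ 2) := Real.log_le_log (by linarith) (by nlinarith)
    _ = 2 * Real.log ⌊x⌋₊ := by simp

end Parameters

theorem phi_equal_count_special_general (ℓ : ℕ) (hℓ : ℓ ≠ 0) :
    ∃ C : ℝ, 0 < C ∧ ∀ᶠ x : ℝ in atTop,
      ({p : ℕ | p.Prime ∧ (p : ℝ) ≤ x ∧ ℓ < p ∧
          Nat.totient (p - ℓ) = Nat.totient (p + ℓ)}.ncard : ℝ) ≤
        C * x / (Real.log x) ^ 3 := by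
  classical
  obtain ⟨C, hC, hbound⟩ := exists_eventually_card_le_of_totient_eq hℓ
  refine ⟨8 * C, by positivity, ?_⟩
  filter_upwards [tendsto_nat_floor_atTop.eventually hbound, eventually_ge_atTop 4] with x hx hx4
  have hlog : 0 < Real.log x := Real.log_pos (by linarith)
  set A : Finset ℕ := {N ∈ Finset.Icc 1 ⌊x⌋₊ | (N + ℓ).Prime ∧ N.totient = (N + 2 * ℓ).totient}
  have hsub : {p : ℕ | p.Prime ∧ (p : ℝ) ≤ x ∧ ℓ < p ∧ (p - ℓ).totient = (p + ℓ).totient} ⊆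
      A.image (· + ℓ) := by
    rintro p ⟨hp, hpx, hℓp, htot⟩
    obtain ⟨N, rfl⟩ := Nat.exists_eq_add_of_le' hℓp.le
    have hNx := Nat.le_floor hpx
    rw [Nat.add_sub_cancel, add_assoc, ← two_mul] at htot
    exact Finset.mem_coe.2 (Finset.mem_image_of_mem _ (Finset.mem_filter.2
      ⟨Finset.mem_Icc.2 ⟨by lia, by lia⟩, hp, htot⟩))
  have hcard := (Set.ncard_le_ncard hsub).trans
    ((Set.ncard_coe_finset _).trans_le Finset.card_image_le)
  calc _ ≤ (A.card : ℝ) := mod_cast hcard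
    _ ≤ C * (⌊x⌋₊ / Real.log ⌊x⌋₊ ^ 3) := hx A (Finset.filter_subset _ _)
        (fun N hN ↦ (Finset.mem_filter.1 hN).2.1) fun N hN ↦ (Finset.mem_filter.1 hN).2.2
    _ ≤ C * (x / (Real.log x / 2) ^ 3) := by
        gcongr
        · exact Nat.floor_le (by linarith)
        · linarith [log_le_two_mul_log_floor hx4]
    _ = 8 * C * x / Real.log x ^ 3 := by
        field_simp
        ring

theorem phi_equal_count_special (ℓ n : ℕ) (hn : 1 ≤ n) (hℓ : ℓ = 4 ^ n - 1) :
    ∃ C : ℝ, 0 < C ∧ ∀ᶠ x : ℝ in atTop,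
      ({p : ℕ | p.Prime ∧ (p : ℝ) ≤ x ∧ ℓ < p ∧
          Nat.totient (p - ℓ) = Nat.totient (p + ℓ)}.ncard : ℝ) ≤
        C * x / (Real.log x) ^ 3 :=
  phi_equal_count_special_general ℓ <| hℓ ▸ Nat.sub_ne_zero_of_lt
    (Nat.one_lt_pow (Nat.one_le_iff_ne_zero.1 hn) (by norm_num))
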